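/- arXiv:1206.1008 — 5 statements merged into one kernel-verified Lean document; each statement's English description precedes it below -/
import Mathlib

section
/- Let k be a finite field, V a finite-dimensional k-vector space, and K/k a field extension. Every automorphism φ of the K-scheme Ω(V)_K := Ω(V) ×_{Spec k} Spec K over K comes by base change from a k-automorphism of P(V): there exists an automorphism ψ of P(V) over k such that (ψ ×_{Spec k} id_{Spec K}) ∘ ι_K = ι_K ∘ φ, where ι_K : Ω(V)_K → P(V) ×_{Spec k} Spec K is the base change of the open immersion ι : Ω(V) → P(V). -/
open AlgebraicGeometry CategoryTheory MvPolynomial Module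

attribute [local instance] MvPolynomial.gradedAlgebra

/-- The projective space `P(V)` over `k` for an `m`-dimensional vector space `V`:
the Proj of the polynomial ring in `m` variables over `k` with its standard
grading (equivalently, of `Sym V`). -/
noncomputable abbrev projSpace (k : Type*) [Field k] (m : ℕ) : Scheme :=
  Proj (homogeneousSubmodule (Fin m) k)

/-- The set of points of `P(V)` lying on no `k`-rational hyperplane, i.e. in the
complement of the zero locus of every nonzero linear form. -/
def drinfeldSet (k : Type*) [Field k] (m : ℕ) : Set (projSpace k m) :=
  {x | ∀ c : Fin m → k, c ≠ 0 →
    (∑ i, MvPolynomial.C (c i) * MvPolynomial.X i) ∉ x.asHomogeneousIdeal}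

lemma isOpen_drinfeldSet (k : Type*) [Field k] [Fintype k] (m : ℕ) :
    IsOpen (drinfeldSet k m) := by
  have : drinfeldSet k m = ⋂ c : {c : Fin m → k // c ≠ 0},
      (Proj.basicOpen (homogeneousSubmodule (Fin m) k)
        (∑ i, MvPolynomial.C (c.1 i) * MvPolynomial.X i) : Set (projSpace k m)) := by
    ext x
    simp only [drinfeldSet, Set.mem_setOf_eq, Set.mem_iInter, Subtype.forall]
    rfl
  rw [this]
  exact isOpen_iInter_of_finite fun c =>
    (Proj.basicOpen (homogeneousSubmodule (Fin m) k) _).isOpen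

/-- The Drinfeld half-space `Ω(V)` as an open subset of `P(V)`. -/
def drinfeldOpens (k : Type*) [Field k] [Fintype k] (m : ℕ) : (projSpace k m).Opens :=
  ⟨drinfeldSet k m, isOpen_drinfeldSet k m⟩

/-- The Drinfeld half-space `Ω(V)` as a scheme. -/
noncomputable abbrev drinfeldScheme (k : Type*) [Field k] [Fintype k] (m : ℕ) : Scheme :=
  (drinfeldOpens k m).toScheme

/-- The open immersion `ι : Ω(V) → P(V)`. -/
noncomputable def drinfeldι (k : Type*) [Field k] [Fintype k] (m : ℕ) :
    drinfeldScheme k m ⟶ projSpace k m :=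
  (drinfeldOpens k m).ι

/-- The structure morphism `P(V) ⟶ Spec k`. -/
noncomputable def projStruct (k : Type*) [Field k] (m : ℕ) :
    projSpace k m ⟶ Spec (CommRingCat.of k) :=
  Proj.toSpecZero (homogeneousSubmodule (Fin m) k) ≫
    Spec.map (CommRingCat.ofHom
      ((GradedRing.projZeroRingHom' (homogeneousSubmodule (Fin m) k)).comp
        (algebraMap k (MvPolynomial (Fin m) k))))

/-- The structure morphism `Ω(V) ⟶ Spec k`. -/
noncomputable def drinfeldStruct (k : Type*) [Field k] [Fintype k] (m : ℕ) :
    drinfeldScheme k m ⟶ Spec (CommRingCat.of k) :=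
  drinfeldι k m ≫ projStruct k m

open CategoryTheory.Limits

universe u

set_option linter.unusedSectionVars false

namespace Drin
open Classical in
/-- indicator of the nonzero vectors of a subspace -/
noncomputable def ind {k V : Type*} [Field k] [AddCommGroup V] [Module k V]
    (W : Submodule k V) (v : V) : ℕ := if v ≠ 0 ∧ v ∈ W then 1 else 0

/-- Normalized ultrametric norms on `V` with values in `ℕ`. -/
structure IsNrm (k : Type*) {V : Type*} [Field k] [AddCommGroup V] [Module k V]
    (f : V → ℕ) : Prop where
  add : ∀ u v, u ≠ 0 → v ≠ 0 → u + v ≠ 0 → min (f u) (f v) ≤ f (u + v)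
  smul : ∀ (c : k) (v : V), c ≠ 0 → v ≠ 0 → f (c • v) = f v
  zero : f 0 = 0
  norm : ∃ v, v ≠ 0 ∧ f v = 0

section comb
variable {k V : Type*} [Field k] [AddCommGroup V] [Module k V]

lemma ind_mem {W : Submodule k V} {v : V} (h0 : v ≠ 0) (h : v ∈ W) : ind W v = 1 := by
  simp [ind, h0, h]
lemma ind_nmem {W : Submodule k V} {v : V} (h : v ∉ W) : ind W v = 0 := by
  simp [ind, h]
lemma ind_zero (W : Submodule k V) : ind W 0 = 0 := by simp [ind]
lemma ind_le (W : Submodule k V) (v) : ind W v ≤ 1 := by unfold ind; split_ifs <;> simp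
lemma ind_pos {W : Submodule k V} {v : V} (h : 0 < ind W v) : v ∈ W := by
  by_contra h'; rw [ind_nmem h'] at h; exact absurd h (lt_irrefl _)
lemma ind_mono {W W' : Submodule k V} (h : ind W = ind W') : W ≤ W' := by
  intro v hv
  by_cases h0 : v = 0
  · rw [h0]; exact W'.zero_mem
  · exact ind_pos (by rw [← h, ind_mem h0 hv]; exact one_pos)
lemma ind_inj {W W' : Submodule k V} (h : ind W = ind W') : W = W' :=
  le_antisymm (ind_mono h) (ind_mono h.symm)

lemma ind_smul (W : Submodule k V) {c : k} {v : V} (hc : c ≠ 0) (hv : v ≠ 0) :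
    ind W (c • v) = ind W v := by
  have h0 : c • v ≠ 0 := smul_ne_zero hc hv
  by_cases h : v ∈ W
  · rw [ind_mem hv h, ind_mem h0 (W.smul_mem c h)]
  · rw [ind_nmem h, ind_nmem (fun h' => h ((Submodule.smul_mem_iff W hc).1 h'))]

lemma exists_nmem {W : Submodule k V} (h : W ≠ ⊤) : ∃ v, v ∉ W := by
  by_contra! h'; exact h (eq_top_iff.2 fun v _ => h' v)

lemma ne_zero_of_nmem {W : Submodule k V} {v} (h : v ∉ W) : v ≠ 0 := by
  rintro rfl; exact h W.zero_mem

lemma exists_mem {W : Submodule k V} (h : W ≠ ⊥) : ∃ v ∈ W, v ≠ 0 :=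
  (Submodule.ne_bot_iff _).1 h

lemma exists_nmem₂ {W W' : Submodule k V} (h : W ≠ ⊤) (h' : W' ≠ ⊤) : ∃ v, v ∉ W ∧ v ∉ W' := by
  obtain ⟨a, ha⟩ := exists_nmem h
  obtain ⟨b, hb⟩ := exists_nmem h'
  by_cases ha' : a ∈ W'
  · by_cases hb' : b ∈ W
    · refine ⟨a + b, fun h => ha ?_, fun h => hb ?_⟩
      · exact (Submodule.add_mem_iff_left _ hb').1 h
      · exact (Submodule.add_mem_iff_right _ ha').1 h
    · exact ⟨b, hb', hb⟩
  · exact ⟨a, ha, ha'⟩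

/-- support of a norm -/
def IsNrm.supp {f : V → ℕ} (hf : IsNrm k f) : Submodule k V where
  carrier := {v | v = 0 ∨ 0 < f v}
  zero_mem' := Or.inl rfl
  add_mem' := by
    rintro a b (rfl | ha) (rfl | hb)
    · simp
    · right; simpa using hb
    · right; simpa using ha
    · by_cases h0 : a + b = 0
      · exact Or.inl h0
      · right
        have ha0 : a ≠ 0 := by rintro rfl; rw [hf.zero] at ha; exact lt_irrefl _ ha
        have hb0 : b ≠ 0 := by rintro rfl; rw [hf.zero] at hb; exact lt_irrefl _ hb
        exact lt_of_lt_of_le (lt_min ha hb) (hf.add a b ha0 hb0 h0)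
  smul_mem' := by
    rintro c a (rfl | ha)
    · simp
    · by_cases h0 : c = 0
      · left; simp [h0]
      · right
        have ha0 : a ≠ 0 := by rintro rfl; rw [hf.zero] at ha; exact lt_irrefl _ ha
        rw [hf.smul c a h0 ha0]; exact ha

lemma IsNrm.mem_supp {f : V → ℕ} (hf : IsNrm k f) {v : V} (h0 : v ≠ 0) :
    v ∈ hf.supp ↔ 0 < f v := by
  change (v = 0 ∨ 0 < f v) ↔ _
  simp [h0]

lemma IsNrm.supp_ne_top {f : V → ℕ} (hf : IsNrm k f) : hf.supp ≠ ⊤ := by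
  obtain ⟨v, h0, hv⟩ := hf.norm
  intro h
  have : v ∈ hf.supp := by rw [h]; trivial
  rw [hf.mem_supp h0, hv] at this
  exact lt_irrefl _ this

lemma IsNrm.supp_ne_bot {f : V → ℕ} (hf : IsNrm k f) (h : f ≠ 0) : hf.supp ≠ ⊥ := by
  intro hb
  apply h
  funext v
  by_cases h0 : v = 0
  · rw [h0, hf.zero]; rfl
  · by_contra h1
    have : v ∈ hf.supp := (hf.mem_supp h0).2 (Nat.pos_of_ne_zero h1)
    rw [hb] at this
    exact h0 ((Submodule.mem_bot _).1 this)

lemma isNrm_ind {W : Submodule k V} (h : W ≠ ⊤) : IsNrm k (ind W) where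
  add u v hu hv huv := by
    by_cases h1 : u ∈ W
    · by_cases h2 : v ∈ W
      · rw [ind_mem huv (W.add_mem h1 h2)]; exact (min_le_left _ _).trans (ind_le _ _)
      · rw [ind_nmem h2]; simp
    · rw [ind_nmem h1]; simp
  smul c v hc hv := by
    exact ind_smul W hc hv
  zero := ind_zero W
  norm := by
    obtain ⟨v, hv⟩ := exists_nmem h
    exact ⟨v, ne_zero_of_nmem hv, ind_nmem hv⟩

lemma isNrm_ind_add {W W' : Submodule k V} (hle : W ≤ W') (h : W' ≠ ⊤) :
    IsNrm k (fun v => ind W v + ind W' v) where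
  add u v hu hv huv := by
    have ht : W ≠ ⊤ := fun hh => h (top_le_iff.1 (hh ▸ hle))
    have key : ∀ x : V, ind W x ≤ ind W' x := by
      intro x
      by_cases h0 : x = 0
      · simp [h0, ind_zero]
      by_cases h1 : x ∈ W
      · rw [ind_mem h0 (hle h1)]; exact ind_le _ _
      · rw [ind_nmem h1]; exact Nat.zero_le _
    have a1 := (isNrm_ind ht).add u v hu hv huv
    have a2 := (isNrm_ind h).add u v hu hv huv
    have b1 := key u
    have b2 := key v
    have c1 := ind_le W' u
    have c2 := ind_le W' v
    omega
  smul c v hc hv := by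
    rw [ind_smul W hc hv, ind_smul W' hc hv]
  zero := by simp [ind_zero]
  norm := by
    obtain ⟨v, hv⟩ := exists_nmem h
    exact ⟨v, ne_zero_of_nmem hv, by simp [ind_nmem hv, ind_nmem (fun h' => hv (hle h'))]⟩

lemma IsNrm.pred {f : V → ℕ} (hf : IsNrm k f) : IsNrm k (fun v => f v - 1) where
  add u v hu hv huv := by have := hf.add u v hu hv huv; omega
  smul c v hc hv := by simp only [hf.smul c v hc hv]
  zero := by simp [hf.zero]
  norm := by obtain ⟨v, h0, hv⟩ := hf.norm; exact ⟨v, h0, by simp [hv]⟩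

lemma IsNrm.split {f : V → ℕ} (hf : IsNrm k f) (v : V) : ind hf.supp v + (f v - 1) = f v := by
  by_cases h0 : v = 0
  · simp [h0, ind_zero, hf.zero]
  · by_cases h : v ∈ hf.supp
    · rw [ind_mem h0 h]; rw [hf.mem_supp h0] at h; omega
    · rw [ind_nmem h]; rw [hf.mem_supp h0] at h; omega

lemma IsNrm.neg {f : V → ℕ} (hf : IsNrm k f) {v : V} (h : v ≠ 0) : f (-v) = f v := by
  rw [← hf.smul (-1) v (by simp) h]; simp

lemma irr {g1 g2 : V → ℕ} (h1 : IsNrm k g1) (h2 : IsNrm k g2) {W : Submodule k V} {s : ℕ}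
    (h : ∀ v, v ≠ 0 → g1 v + g2 v = ind W v + s) : g1 = 0 ∨ g2 = 0 := by
  obtain ⟨v, hv1, hv2⟩ := exists_nmem₂ h1.supp_ne_top h2.supp_ne_top
  have hv0 := ne_zero_of_nmem hv1
  rw [h1.mem_supp hv0] at hv1
  rw [h2.mem_supp hv0] at hv2
  have hs : s = 0 := by have := h v hv0; omega
  subst hs
  by_contra! hc
  obtain ⟨a, ha⟩ := exists_mem (h1.supp_ne_bot hc.1)
  obtain ⟨b, hb⟩ := exists_mem (h2.supp_ne_bot hc.2)
  obtain ⟨ha, ha0⟩ := ha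
  obtain ⟨hb, hb0⟩ := hb
  rw [h1.mem_supp ha0] at ha
  rw [h2.mem_supp hb0] at hb
  have ea := h a ha0
  have eb := h b hb0
  have la := ind_le W a
  have lb := ind_le W b
  have hab : a + b ≠ 0 := by
    intro hh
    have : b = -a := (neg_eq_of_add_eq_zero_right hh).symm
    have := h1.neg ha0
    grind
  have eab := h _ hab
  have ma : a ∈ W := ind_pos (by omega)
  have mb : b ∈ W := ind_pos (by omega)
  rw [ind_mem hab (W.add_mem ma mb)] at eab
  have k1 := h1.add (a+b) (-a) hab (by simpa) (by simpa)
  have k2 := h2.add (a+b) (-b) hab (by simpa) (by simpa)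
  rw [h1.neg ha0] at k1
  rw [h2.neg hb0] at k2
  rw [show a + b + -a = b by abel] at k1
  rw [show a + b + -b = a by abel] at k2
  omega

end comb

/-- Abstract pull-back operation on norms. -/
structure IsTrans (k : Type*) {V : Type*} [Field k] [AddCommGroup V] [Module k V]
    (Φ Ψ : (V → ℕ) → (V → ℕ)) : Prop where
  nrm : ∀ f, IsNrm k f → IsNrm k (Φ f)
  rel : ∀ (t : Finset V) (f : V → V → ℕ) (g : V → ℕ) (r s : ℕ), (∀ i ∈ t, IsNrm k (f i)) →
    IsNrm k g → (∀ v, v ≠ 0 → ∑ i ∈ t, f i v = r * g v + s) →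
    ∃ s', ∀ v, v ≠ 0 → ∑ i ∈ t, Φ (f i) v = r * Φ g v + s'
  rel₂ : ∀ (f1 f2 g : V → ℕ) (s : ℕ), IsNrm k f1 → IsNrm k f2 →
    IsNrm k g → (∀ v, v ≠ 0 → f1 v + f2 v = g v + s) →
    ∃ s', ∀ v, v ≠ 0 → Φ f1 v + Φ f2 v = Φ g v + s'
  inv : ∀ f, IsNrm k f → Ψ (Φ f) = f

section trans
variable {k V : Type*} [Field k] [AddCommGroup V] [Module k V]
variable {Φ Ψ : (V → ℕ) → (V → ℕ)}

lemma isNrm_zero [Nontrivial V] : IsNrm k (0 : V → ℕ) where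
  add := by simp
  smul := by simp
  zero := rfl
  norm := by obtain ⟨v, hv⟩ := exists_ne (0 : V); exact ⟨v, hv, rfl⟩

lemma IsTrans.map_zero [Nontrivial V] (h : IsTrans k Φ Ψ) : Φ 0 = 0 := by
  obtain ⟨s', hs⟩ := h.rel₂ 0 0 0 0 isNrm_zero isNrm_zero isNrm_zero (by simp)
  have hn := h.nrm 0 isNrm_zero
  obtain ⟨v, h0, hv⟩ := hn.norm
  have : s' = 0 := by have := hs v h0; omega
  funext u
  by_cases hu : u = 0
  · rw [hu, hn.zero]; rfl
  · have := hs u hu; simp only [Pi.zero_apply]; omega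

lemma IsTrans.map_ind [Nontrivial V] (h : IsTrans k Φ Ψ) (h' : IsTrans k Ψ Φ)
    {W : Submodule k V} (hb : W ≠ ⊥) (ht : W ≠ ⊤) :
    ∃ W' : Submodule k V, W' ≠ ⊥ ∧ W' ≠ ⊤ ∧ Φ (ind W) = ind W' := by
  have hn := isNrm_ind ht
  have hF := h.nrm _ hn
  have hne : Φ (ind W) ≠ 0 := by
    intro h0
    have h1 := h.inv _ hn
    rw [h0, h'.map_zero] at h1
    obtain ⟨v, hv, hv0⟩ := exists_mem hb
    have := congrFun h1 v
    rw [ind_mem hv0 hv] at this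
    simp at this
  refine ⟨hF.supp, hF.supp_ne_bot hne, hF.supp_ne_top, ?_⟩
  obtain ⟨s', hs'⟩ := h'.rel₂ (ind hF.supp) (fun v => Φ (ind W) v - 1) (Φ (ind W)) 0
    (isNrm_ind hF.supp_ne_top) hF.pred hF (fun v _ => by rw [hF.split, add_zero])
  rw [h.inv _ hn] at hs'
  rcases irr (h'.nrm _ (isNrm_ind hF.supp_ne_top)) (h'.nrm _ hF.pred) hs' with h0 | h0
  · exfalso
    have h1 := h'.inv _ (isNrm_ind hF.supp_ne_top)
    rw [h0, h.map_zero] at h1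
    obtain ⟨v, hv, hv0⟩ := exists_mem (hF.supp_ne_bot hne)
    have := congrFun h1 v
    rw [ind_mem hv0 hv] at this
    simp at this
  · have h1 := h'.inv _ hF.pred
    rw [h0, h.map_zero] at h1
    funext v
    have := congrFun h1 v
    have e := hF.split v
    simp only [Pi.zero_apply] at this
    omega

lemma IsTrans.comparable (h : IsTrans k Φ Ψ) {W1 W2 W1' W2' : Submodule k V}
    (hle : W1 ≤ W2) (ht : W2 ≠ ⊤) (h1 : Φ (ind W1) = ind W1') (h2 : Φ (ind W2) = ind W2') :
    W1' ≤ W2' ∨ W2' ≤ W1' := by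
  have hn := isNrm_ind_add hle ht
  have ht1 : W1 ≠ ⊤ := fun hh => ht (top_le_iff.1 (hh ▸ hle))
  obtain ⟨s', hs⟩ := h.rel₂ _ _ _ 0 (isNrm_ind ht1) (isNrm_ind ht) hn (fun _ _ => rfl)
  have hF := h.nrm _ hn
  rw [h1, h2] at hs
  by_contra! hc
  obtain ⟨a, ha, ha'⟩ := SetLike.not_le_iff_exists.1 hc.1
  obtain ⟨b, hb, hb'⟩ := SetLike.not_le_iff_exists.1 hc.2
  have n1 : a + b ∉ W1' := fun h => hb' ((Submodule.add_mem_iff_right _ ha).1 h)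
  have n2 : a + b ∉ W2' := fun h => ha' ((Submodule.add_mem_iff_left _ hb).1 h)
  have a0 := ne_zero_of_nmem ha'
  have b0 := ne_zero_of_nmem hb'
  have ab0 := ne_zero_of_nmem n1
  have ea := hs a a0
  have eb := hs b b0
  have eab := hs _ ab0
  rw [ind_mem a0 ha, ind_nmem ha'] at ea
  rw [ind_nmem hb', ind_mem b0 hb] at eb
  rw [ind_nmem n1, ind_nmem n2] at eab
  have := hF.add a b a0 b0 ab0
  omega

end trans
end Drin


namespace Drin
section lines
variable {k V : Type*} [Field k] [Fintype k] [AddCommGroup V] [Module k V] [Fintype V]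

open Classical in
/-- nonzero vectors on the line through `x` -/
noncomputable def ell (k : Type*) {V : Type*} [Field k] [AddCommGroup V] [Module k V] [Fintype V]
    (x : V) : Finset V :=
  Finset.univ.filter fun z => z ≠ 0 ∧ z ∈ Submodule.span k {x}

lemma mem_ell {x z : V} : z ∈ ell k x ↔ z ≠ 0 ∧ z ∈ Submodule.span k {x} := by simp [ell]

lemma span_eq_of_mem {x z : V} (hz : z ≠ 0) (h : z ∈ Submodule.span k {x}) :
    Submodule.span k {z} = Submodule.span k {x} := by
  obtain ⟨c, rfl⟩ := Submodule.mem_span_singleton.1 h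
  have hc : c ≠ 0 := by rintro rfl; simp at hz
  exact Submodule.span_singleton_smul_eq (IsUnit.mk0 c hc) x

lemma mem_span_symm {x z : V} (hz : z ≠ 0) (h : z ∈ Submodule.span k {x}) :
    x ∈ Submodule.span k {z} := by
  rw [span_eq_of_mem hz h]; exact Submodule.mem_span_singleton_self x

lemma mem_ell_iff {x z : V} (hx : x ≠ 0) : z ∈ ell k x ↔ z ≠ 0 ∧ x ∈ Submodule.span k {z} := by
  rw [mem_ell]
  constructor
  · rintro ⟨h1, h2⟩; exact ⟨h1, mem_span_symm h1 h2⟩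
  · rintro ⟨h1, h2⟩; exact ⟨h1, mem_span_symm hx h2⟩

lemma card_ell {x : V} (hx : x ≠ 0) : (ell k x).card = Fintype.card k - 1 := by
  classical
  rw [← Fintype.card_units, ← Finset.card_univ]
  symm
  refine Finset.card_bij (fun c _ => (c : k) • x) ?_ ?_ ?_
  · intro c _
    rw [mem_ell]
    exact ⟨smul_ne_zero c.ne_zero hx, Submodule.smul_mem _ _ (Submodule.mem_span_singleton_self x)⟩
  · intro a _ b _ h
    exact Units.ext (smul_left_injective k hx h)
  · intro z hz
    rw [mem_ell] at hz
    obtain ⟨c, hc⟩ := Submodule.mem_span_singleton.1 hz.2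
    have hc0 : c ≠ 0 := by rintro rfl; exact hz.1 (by rw [← hc]; simp)
    exact ⟨Units.mk0 c hc0, Finset.mem_univ _, hc⟩

lemma one_le_q : 1 ≤ Fintype.card k - 1 := by
  have := Fintype.one_lt_card (α := k); omega

lemma ell_disj {x y : V} (h : Submodule.span k {x} ≠ Submodule.span k {y}) :
    Disjoint (ell k x) (ell k y) := by
  rw [Finset.disjoint_left]
  intro z hz hz'
  rw [mem_ell] at hz hz'
  exact h ((span_eq_of_mem hz.1 hz.2).symm.trans (span_eq_of_mem hz'.1 hz'.2))

open Classical in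
lemma sum_ind (t : Finset V) (W : V → Submodule k V) {v : V} (hv : v ≠ 0) :
    ∑ z ∈ t, ind (W z) v = (t.filter fun z => v ∈ W z).card := by
  rw [Finset.card_filter]
  apply Finset.sum_congr rfl
  intro z _
  simp [ind, hv]

open Classical in
lemma sum_line (L : Submodule k V) {v : V} (hv : v ≠ 0) :
    ∑ z ∈ Finset.univ.filter (fun z => z ≠ 0 ∧ z ∈ L), ind (Submodule.span k {z}) v =
      (Fintype.card k - 1) * ind L v := by
  rw [sum_ind _ _ hv, Finset.filter_filter]
  by_cases hL : v ∈ L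
  · rw [ind_mem hv hL, mul_one, ← card_ell (k := k) hv]
    congr 1
    ext z
    simp only [Finset.mem_filter, Finset.mem_univ, true_and]
    rw [mem_ell_iff hv]
    constructor
    · rintro ⟨⟨a, b⟩, c⟩; exact ⟨a, c⟩
    · rintro ⟨a, c⟩
      refine ⟨⟨a, ?_⟩, c⟩
      obtain ⟨d, rfl⟩ := Submodule.mem_span_singleton.1 (mem_span_symm hv c)
      exact L.smul_mem _ hL
  · rw [ind_nmem hL, mul_zero, Finset.card_eq_zero, Finset.filter_eq_empty_iff]
    rintro z - ⟨⟨_, h2⟩, h3⟩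
    obtain ⟨d, rfl⟩ := Submodule.mem_span_singleton.1 h3
    exact hL (L.smul_mem _ h2)

variable {Φ Ψ : (V → ℕ) → (V → ℕ)}

lemma span_ne_bot {x : V} (hx : x ≠ 0) : Submodule.span k {x} ≠ ⊥ := by
  rwa [Ne, Submodule.span_singleton_eq_bot]

lemma span_ne_top (hd : 2 ≤ Module.finrank k V) (x : V) : Submodule.span k {x} ≠ ⊤ := by
  intro h
  have h1 := finrank_span_le_card (R := k) ({x} : Set V)
  rw [h, finrank_top] at h1
  simp at h1
  omega

open Classical in
lemma disj (hΦ : IsTrans k Φ Ψ) (hΨ : IsTrans k Ψ Φ) (hd : 2 ≤ Module.finrank k V)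
    (W : V → Submodule k V)
    (hW : ∀ x, x ≠ 0 → W x ≠ ⊥ ∧ W x ≠ ⊤ ∧ Φ (ind (Submodule.span k {x})) = ind (W x))
    {x y : V} (hx : x ≠ 0) (hy : y ≠ 0) (hxy : Submodule.span k {x} ≠ Submodule.span k {y})
    {v : V} (hv : v ≠ 0) (h1 : v ∈ W x) (h2 : v ∈ W y) : False := by
  have : Nontrivial V := ⟨x, 0, hx⟩
  have hcong : ∀ a b, a ≠ 0 → b ≠ 0 → Submodule.span k {a} = Submodule.span k {b} → W a = W b := by
    intro a b ha hb hab
    apply ind_inj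
    rw [← (hW a ha).2.2, ← (hW b hb).2.2, hab]
  have hinj : ∀ a b, a ≠ 0 → b ≠ 0 → W a = W b → Submodule.span k {a} = Submodule.span k {b} := by
    intro a b ha hb hab
    apply ind_inj
    rw [← hΦ.inv _ (isNrm_ind (span_ne_top hd a)), ← hΦ.inv _ (isNrm_ind (span_ne_top hd b)),
      (hW a ha).2.2, (hW b hb).2.2, hab]
  set q1 := Fintype.card k - 1 with hq1
  have hq : 1 ≤ q1 := one_le_q
  by_cases hL : Submodule.span k {x, y} = ⊤
  · -- two-dimensional case
    have hdim : Module.finrank k V ≤ 2 := by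
      have h1 := finrank_span_finset_le_card (R := k) ({x, y} : Finset V)
      rw [Set.finrank, Finset.coe_pair, hL, finrank_top] at h1
      exact h1.trans Finset.card_le_two
    have key : ∀ a, a ≠ 0 → v ∈ W a → Submodule.span k {v} = W a := by
      intro a ha hva
      apply Submodule.eq_of_le_of_finrank_le
      · rwa [Submodule.span_singleton_le_iff_mem]
      · rw [finrank_span_singleton hv]
        have := Submodule.finrank_lt (hW a ha).2.1
        omega
    exact hxy (hinj x y hx hy ((key x hx h1).symm.trans (key y hy h2)))
  · set L := Submodule.span k {x, y} with hLdef
    have hxL : x ∈ L := Submodule.subset_span (by simp)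
    have hyL : y ∈ L := Submodule.subset_span (by simp)
    have hLb : L ≠ ⊥ := fun h => hx (by rw [h] at hxL; simpa using hxL)
    obtain ⟨U, hUb, hUt, hU⟩ := hΦ.map_ind hΨ hLb hL
    set t := Finset.univ.filter (fun z => z ≠ 0 ∧ z ∈ L) with ht
    have memt : ∀ z, z ∈ t ↔ z ≠ 0 ∧ z ∈ L := by intro z; simp [ht]
    obtain ⟨s, hs⟩ := hΦ.rel t (fun z => ind (Submodule.span k {z})) (ind L) q1 0
      (fun z _ => isNrm_ind (span_ne_top hd z)) (isNrm_ind hL)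
      (fun v hv => by rw [add_zero]; exact sum_line L hv)
    rw [hU] at hs
    have hN : ∀ v, v ≠ 0 → (t.filter fun z => v ∈ W z).card = q1 * ind U v + s := by
      intro v hv
      rw [← hs v hv, ← sum_ind _ _ hv]
      apply Finset.sum_congr rfl
      intro z hz
      rw [(hW z ((memt z).1 hz).1).2.2]
    have hcomp : ∀ z, z ∈ t → W z ≤ U ∨ U ≤ W z := by
      intro z hz
      rw [memt] at hz
      refine hΦ.comparable (W1 := Submodule.span k {z}) (W2 := L) ?_ hL (hW z hz.1).2.2 hU
      rw [Submodule.span_singleton_le_iff_mem]; exact hz.2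
    have hell : ∀ z, z ∈ t → ell k z ⊆ t := by
      intro z hz w hw
      rw [memt] at hz ⊢
      rw [mem_ell] at hw
      obtain ⟨d, hd⟩ := Submodule.mem_span_singleton.1 hw.2
      exact ⟨hw.1, by rw [← hd]; exact L.smul_mem _ hz.2⟩
    have hellW : ∀ z, z ∈ t → ∀ w ∈ ell k z, W w = W z := by
      intro z hz w hw
      rw [memt] at hz
      rw [mem_ell] at hw
      exact hcong w z hw.1 hz.1 (span_eq_of_mem hw.1 hw.2)
    set t1 := t.filter (fun z => ¬ W z ≤ U) with ht1
    have memt1 : ∀ z, z ∈ t1 ↔ z ∈ t ∧ ¬ W z ≤ U := by intro z; simp [ht1]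
    have hell1 : ∀ z, z ∈ t1 → ell k z ⊆ t1 := by
      intro z hz w hw
      rw [memt1] at hz ⊢
      exact ⟨hell z hz.1 hw, by rw [hellW z hz.1 w hw]; exact hz.2⟩
    have hsub : ∀ v, v ∉ U → (t.filter fun z => v ∈ W z) ⊆ t1 := by
      intro v hv z hz
      rw [Finset.mem_filter] at hz
      rw [memt1]
      exact ⟨hz.1, fun h => hv (h hz.2)⟩
    have hxt : x ∈ t := (memt x).2 ⟨hx, hxL⟩
    have hyt : y ∈ t := (memt y).2 ⟨hy, hyL⟩
    have hempty : ∀ z1, z1 ∉ t1 := by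
      intro z1 hz1
      have hz1' := (memt1 z1).1 hz1
      have hz10 := ((memt z1).1 hz1'.1).1
      have hUz : ∀ z, z ∈ t1 → U ≤ W z := by
        intro z hz
        rw [memt1] at hz
        exact (hcomp z hz.1).resolve_left hz.2
      obtain ⟨z0, hz0t, hz0⟩ : ∃ z0, z0 ∈ t ∧ Submodule.span k {z0} ≠ Submodule.span k {z1} := by
        by_cases h : Submodule.span k {x} = Submodule.span k {z1}
        · exact ⟨y, hyt, fun h' => hxy (h.trans h'.symm)⟩
        · exact ⟨x, hxt, h⟩
      have hz00 := ((memt z0).1 hz0t).1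
      by_cases hz01 : z0 ∈ t1
      · obtain ⟨w, hw0, hw1⟩ := exists_nmem₂ (hW z0 hz00).2.1 (hW z1 hz10).2.1
        have hwU : w ∉ U := fun h => hw0 (hUz z0 hz01 h)
        have hc := hN w (ne_zero_of_nmem hwU)
        rw [ind_nmem hwU] at hc
        obtain ⟨u, huU, hu0⟩ := exists_mem hUb
        have hc' := hN u hu0
        rw [ind_mem hu0 huU] at hc'
        have hle : t1.card ≤ (t.filter fun z => u ∈ W z).card := by
          apply Finset.card_le_card
          intro z hz
          rw [Finset.mem_filter]
          exact ⟨((memt1 z).1 hz).1, hUz z hz huU⟩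
        have hle2 : ((t.filter fun z => w ∈ W z) ∪ (ell k z0 ∪ ell k z1)).card ≤ t1.card := by
          apply Finset.card_le_card
          exact Finset.union_subset (hsub w hwU) (Finset.union_subset (hell1 _ hz01) (hell1 _ hz1))
        rw [Finset.card_union_of_disjoint, Finset.card_union_of_disjoint (ell_disj hz0),
          card_ell hz00, card_ell hz10] at hle2
        · rw [← hq1] at hle2; omega
        · rw [Finset.disjoint_left]
          intro z hz hz'
          rw [Finset.mem_filter] at hz
          rw [Finset.mem_union] at hz'
          rcases hz' with hz' | hz'
          · rw [hellW z0 hz0t z hz'] at hz; exact hw0 hz.2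
          · rw [hellW z1 hz1'.1 z hz'] at hz; exact hw1 hz.2
      · have hz0U : W z0 ≤ U := by
          by_contra h; exact hz01 ((memt1 z0).2 ⟨hz0t, h⟩)
        obtain ⟨w, hw1⟩ := exists_nmem (hW z1 hz10).2.1
        have hwU : w ∉ U := fun h => hw1 (hUz z1 hz1 h)
        have hc := hN w (ne_zero_of_nmem hwU)
        rw [ind_nmem hwU] at hc
        obtain ⟨u, huW, hu0⟩ := exists_mem (hW z0 hz00).1
        have hc' := hN u hu0
        rw [ind_mem hu0 (hz0U huW)] at hc'
        have hle : (insert z0 t1).card ≤ (t.filter fun z => u ∈ W z).card := by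
          apply Finset.card_le_card
          intro z hz
          rw [Finset.mem_filter]
          rw [Finset.mem_insert] at hz
          rcases hz with rfl | hz
          · exact ⟨hz0t, huW⟩
          · exact ⟨((memt1 z).1 hz).1, hUz z hz (hz0U huW)⟩
        rw [Finset.card_insert_of_notMem hz01] at hle
        have hle2 : ((t.filter fun z => w ∈ W z) ∪ (ell k z1)).card ≤ t1.card := by
          apply Finset.card_le_card
          exact Finset.union_subset (hsub w hwU) (hell1 _ hz1)
        rw [Finset.card_union_of_disjoint, card_ell hz10] at hle2
        · rw [← hq1] at hle2; omega
        · rw [Finset.disjoint_left]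
          intro z hz hz'
          rw [Finset.mem_filter] at hz
          rw [hellW z1 hz1'.1 z hz'] at hz; exact hw1 hz.2
    have hs0 : s = 0 := by
      obtain ⟨w, hwU⟩ := exists_nmem hUt
      have hc := hN w (ne_zero_of_nmem hwU)
      rw [ind_nmem hwU] at hc
      have : (t.filter fun z => w ∈ W z) = ∅ := by
        rw [Finset.eq_empty_iff_forall_notMem]
        intro z hz
        exact hempty z (hsub w hwU hz)
      rw [this] at hc
      simpa using hc.symm
    have hc := hN v hv
    have hle2 : (ell k x ∪ ell k y).card ≤ (t.filter fun z => v ∈ W z).card := by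
      apply Finset.card_le_card
      intro z hz
      rw [Finset.mem_filter]
      rw [Finset.mem_union] at hz
      rcases hz with hz | hz
      · exact ⟨hell x hxt hz, by rw [hellW x hxt z hz]; exact h1⟩
      · exact ⟨hell y hyt hz, by rw [hellW y hyt z hz]; exact h2⟩
    rw [Finset.card_union_of_disjoint (ell_disj hxy), card_ell hx, card_ell hy, hc, hs0, ← hq1]
      at hle2
    have := ind_le U v
    have : q1 * ind U v ≤ q1 * 1 := Nat.mul_le_mul_left _ this
    omega

open Classical in
lemma map_point (hΦ : IsTrans k Φ Ψ) (hΨ : IsTrans k Ψ Φ) (hd : 2 ≤ Module.finrank k V)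
    {x : V} (hx : x ≠ 0) :
    ∃ y : V, y ≠ 0 ∧ Φ (ind (Submodule.span k {x})) = ind (Submodule.span k {y}) := by
  have : Nontrivial V := ⟨x, 0, hx⟩
  have : ∀ x : V, ∃ W : Submodule k V, x ≠ 0 → W ≠ ⊥ ∧ W ≠ ⊤ ∧
      Φ (ind (Submodule.span k {x})) = ind W := by
    intro x
    by_cases hx : x = 0
    · exact ⟨⊥, fun h => absurd hx h⟩
    · obtain ⟨W, hW⟩ := hΦ.map_ind hΨ (span_ne_bot hx) (span_ne_top hd x)
      exact ⟨W, fun _ => hW⟩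
  choose W hW using this
  have hdis := @disj k V _ _ _ _ _ Φ Ψ hΦ hΨ hd W hW
  have hcong : ∀ a b, a ≠ 0 → b ≠ 0 → Submodule.span k {a} = Submodule.span k {b} → W a = W b := by
    intro a b ha hb hab
    apply ind_inj
    rw [← (hW a ha).2.2, ← (hW b hb).2.2, hab]
  set q1 := Fintype.card k - 1 with hq1
  set t := Finset.univ.filter (fun z : V => z ≠ 0) with ht
  have memt : ∀ z, z ∈ t ↔ z ≠ 0 := by intro z; simp [ht]
  obtain ⟨s, hs⟩ := hΦ.rel t (fun z => ind (Submodule.span k {z})) 0 0 q1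
    (fun z _ => isNrm_ind (span_ne_top hd z)) isNrm_zero
    (fun v hv => by
      have := sum_line (⊤ : Submodule k V) hv
      rw [ind_mem hv Submodule.mem_top] at this
      simpa [ht] using this)
  have hN : ∀ v, v ≠ 0 → (t.filter fun z => v ∈ W z).card = s := by
    intro v hv
    have := hs v hv
    rw [zero_mul, zero_add] at this
    rw [← this, ← sum_ind _ _ hv]
    apply Finset.sum_congr rfl
    intro z hz
    rw [(hW z ((memt z).1 hz)).2.2]
  have hsq : s = q1 := by
    obtain ⟨v, hvx, hv⟩ := exists_mem (hW x hx).1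
    rw [← hN v hv, hq1, ← card_ell (k := k) hx]
    congr 1
    ext z
    rw [Finset.mem_filter, memt, mem_ell]
    constructor
    · rintro ⟨h1, h2⟩
      refine ⟨h1, ?_⟩
      by_contra h3
      refine hdis h1 hx (fun h => h3 ?_) hv h2 hvx
      rw [← h]; exact Submodule.mem_span_singleton_self z
    · rintro ⟨h1, h2⟩
      exact ⟨h1, by rw [hcong z x h1 hx (span_eq_of_mem h1 h2)]; exact hvx⟩
  have hdc : ∑ z ∈ t, (t.filter fun v => v ∈ W z).card = ∑ v ∈ t, (t.filter fun z => v ∈ W z).card :=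
    Finset.sum_card_bipartiteAbove_eq_sum_card_bipartiteBelow (fun z v => v ∈ W z)
  rw [Finset.sum_congr rfl (fun v hv => (hN v ((memt v).1 hv)).trans hsq)] at hdc
  have hsub : ∀ z y, y ∈ W z → ell k y ⊆ t.filter fun v => v ∈ W z := by
    intro z y hy w hw
    rw [mem_ell] at hw
    rw [Finset.mem_filter, memt]
    refine ⟨hw.1, ?_⟩
    obtain ⟨d, hd⟩ := Submodule.mem_span_singleton.1 hw.2
    rw [← hd]; exact (W z).smul_mem _ hy
  have hge : ∀ z ∈ t, q1 ≤ (t.filter fun v => v ∈ W z).card := by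
    intro z hz
    obtain ⟨y, hyW, hy⟩ := exists_mem (hW z ((memt z).1 hz)).1
    rw [hq1, ← card_ell (k := k) hy]
    exact Finset.card_le_card (hsub z y hyW)
  have heq := (Finset.sum_eq_sum_iff_of_le hge).1 hdc.symm x ((memt x).2 hx)
  obtain ⟨y, hyW, hy⟩ := exists_mem (hW x hx).1
  have := Finset.eq_of_subset_of_card_le (hsub x y hyW) (by rw [← heq, card_ell hy])
  refine ⟨y, hy, ?_⟩
  rw [(hW x hx).2.2]
  congr 1
  apply le_antisymm
  · intro v hv
    by_cases h0 : v = 0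
    · rw [h0]; exact Submodule.zero_mem _
    · have : v ∈ ell k y := by rw [this, Finset.mem_filter, memt]; exact ⟨h0, hv⟩
      exact (mem_ell.1 this).2
  · rwa [Submodule.span_singleton_le_iff_mem]
end lines
end Drin


namespace Drin
section vals
variable {k K : Type*} [Field k] [Field K] [Algebra k K] {m : ℕ}

/-- linear form attached to a coefficient vector -/
noncomputable def lin (k K : Type*) [Field k] [Field K] [Algebra k K] (m : ℕ) :
    (Fin m → k) →ₗ[k] MvPolynomial (Fin m) K :=
  Fintype.linearCombination k (MvPolynomial.X : Fin m → MvPolynomial (Fin m) K)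

lemma lin_apply (v : Fin m → k) : lin k K m v = ∑ i, v i • MvPolynomial.X i := rfl

lemma lin_single (i : Fin m) : lin k K m (Pi.single i 1) = MvPolynomial.X i := by
  rw [lin_apply, Finset.sum_eq_single i]
  · simp
  · intro b _ hb; simp [hb]
  · simp

lemma coeff_lin (v : Fin m → k) (i : Fin m) :
    (lin k K m v).coeff (Finsupp.single i 1) = algebraMap k K (v i) := by
  rw [lin_apply, MvPolynomial.coeff_sum, Finset.sum_eq_single i]
  · simp [Algebra.smul_def]
  · intro b _ hb
    rw [MvPolynomial.coeff_smul, MvPolynomial.coeff_X, if_neg, smul_zero]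
    intro h; exact hb ((Finsupp.single_left_injective one_ne_zero) h)
  · simp

lemma lin_injective : Function.Injective (lin k K m) := by
  intro a b h
  funext i
  have := congrArg (fun p => MvPolynomial.coeff (Finsupp.single i 1) p) h
  simp only [coeff_lin] at this
  exact (algebraMap k K).injective this

lemma lin_ne_zero {v : Fin m → k} (h : v ≠ 0) : lin k K m v ≠ 0 := by
  rw [← map_zero (lin k K m)]; exact fun hh => h (lin_injective hh)

lemma lin_homog (v : Fin m → k) : (lin k K m v).IsHomogeneous 1 := by
  rw [lin_apply]
  apply MvPolynomial.IsHomogeneous.sum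
  intro i _
  have := (MvPolynomial.isHomogeneous_C (Fin m) (algebraMap k K (v i))).mul
    (MvPolynomial.isHomogeneous_X K i)
  rw [zero_add] at this
  convert this using 1
  rw [← MvPolynomial.smul_eq_C_mul, algebraMap_smul]

lemma lin_irr {v : Fin m → k} (h : v ≠ 0) : Irreducible (lin k K m v) := by
  obtain ⟨i, hi⟩ := Function.ne_iff.1 h
  apply MvPolynomial.irreducible_of_totalDegree_eq_one
  · exact (lin_homog v).totalDegree (lin_ne_zero h)
  · intro x hx
    have := hx (Finsupp.single i 1)
    rw [coeff_lin] at this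
    refine isUnit_of_dvd_unit this (IsUnit.mk0 _ ?_)
    simpa using hi

lemma exists_theta [Finite k] (n : ℕ) : ∀ (f : (Fin m → k) → ℕ), IsNrm k f → (∀ v, f v ≤ n) →
    ∃ θ : (Fin m → k) →ₗ[k] Polynomial (MvPolynomial (Fin m) K),
      (∀ v, (θ v).eval 1 = lin k K m v) ∧
      ∀ v, v ≠ 0 → ∃ q, θ v = Polynomial.X ^ (f v) * q ∧ q.coeff 0 ≠ 0 := by
  induction n with
  | zero =>
    intro f hf hn
    refine ⟨((Algebra.linearMap (MvPolynomial (Fin m) K)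
      (Polynomial (MvPolynomial (Fin m) K))).restrictScalars k) ∘ₗ lin k K m, ?_, ?_⟩
    · intro v; simp
    · intro v hv
      refine ⟨Polynomial.C (lin k K m v), ?_, ?_⟩
      · simp [Nat.le_zero.1 (hn v)]
      · simpa using lin_ne_zero hv
  | succ n ih =>
    intro f hf hn
    obtain ⟨θ', h1, h2⟩ := ih _ hf.pred (fun v => by have := hn v; omega)
    obtain ⟨W', hW⟩ := Submodule.exists_isCompl hf.supp
    let P := W'.projection hf.supp hW.symm
    refine ⟨((Algebra.linearMap (MvPolynomial (Fin m) K)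
      (Polynomial (MvPolynomial (Fin m) K))).restrictScalars k) ∘ₗ lin k K m ∘ₗ P +
      LinearMap.mulLeft k Polynomial.X ∘ₗ θ' ∘ₗ (LinearMap.id - P), ?_, ?_⟩
    · intro v; simp [h1]
    · intro v hv
      by_cases hvW : v ∈ hf.supp
      · obtain ⟨q, hq, hq0⟩ := h2 v hv
        have hP : P v = 0 := (Submodule.projection_apply_eq_zero_iff hW.symm).2 hvW
        refine ⟨q, ?_, hq0⟩
        rw [hf.mem_supp hv] at hvW
        simp only [LinearMap.add_apply, LinearMap.comp_apply, hP, map_zero, zero_add,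
          LinearMap.sub_apply, LinearMap.id_apply, sub_zero, LinearMap.mulLeft_apply, hq]
        rw [← mul_assoc, ← pow_succ']
        congr 2
        omega
      · have hP : P v ≠ 0 := fun h => hvW ((Submodule.projection_apply_eq_zero_iff hW.symm).1 h)
        rw [hf.mem_supp hv] at hvW
        refine ⟨_, by rw [Nat.eq_zero_of_not_pos hvW, pow_zero, one_mul], ?_⟩
        simpa using lin_ne_zero hP

/-- valuation-like functions on the fraction field with prescribed values -/
structure IsVal (k : Type*) {K : Type*} [Field k] [Field K] [Algebra k K] {m : ℕ}
    (f : (Fin m → k) → ℕ)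
    (ν : FractionRing (MvPolynomial (Fin m) K) → ℤ) : Prop where
  mul : ∀ a b, a ≠ 0 → b ≠ 0 → ν (a * b) = ν a + ν b
  add : ∀ a b, a ≠ 0 → b ≠ 0 → a + b ≠ 0 → min (ν a) (ν b) ≤ ν (a + b)
  const : ∀ c : K, c ≠ 0 → ν (algebraMap K _ c) = 0
  lin : ∀ v, v ≠ 0 → ν (algebraMap _ _ (lin k K m v)) = f v

lemma order_coe {F : Type*} [Field F] (q : Polynomial F) (n : ℕ) (h : q.coeff 0 ≠ 0) :
    (HahnSeries.ofPowerSeries ℤ F ((Polynomial.X ^ n * q : Polynomial F) : PowerSeries F)).order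
      = n := by
  have hc : ∀ p : Polynomial F, ∀ i : ℕ,
    (HahnSeries.ofPowerSeries ℤ F (p : PowerSeries F)).coeff (i : ℤ) = p.coeff i := by
    intro p i
    have := HahnSeries.ofPowerSeries_apply_coeff (Γ := ℤ) (p : PowerSeries F) i
    simpa using this
  have hne : (HahnSeries.ofPowerSeries ℤ F (q : PowerSeries F)) ≠ 0 := by
    intro h0
    have := hc q 0
    rw [h0] at this
    exact h (by simpa using this.symm)
  have h0 : (HahnSeries.ofPowerSeries ℤ F (q : PowerSeries F)).order = 0 := by
    apply le_antisymm
    · apply HahnSeries.order_le_of_coeff_ne_zero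
      have := hc q 0
      rw [Nat.cast_zero] at this
      rw [this]; exact h
    · rw [HahnSeries.le_order_iff_forall hne]
      intro j hj
      rw [HahnSeries.ofPowerSeries_apply]
      apply HahnSeries.embDomain_of_notMem_range
      rintro ⟨x, hx⟩
      have : (x : ℤ) = j := hx
      omega
  rw [Polynomial.coe_mul, Polynomial.coe_pow, Polynomial.coe_X, map_mul,
    HahnSeries.ofPowerSeries_X_pow, HahnSeries.order_mul (by simp) hne, h0,
    HahnSeries.order_single one_ne_zero]
  simp

lemma exists_isVal [Finite k] {f : (Fin m → k) → ℕ} (hf : IsNrm k f) :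
    ∃ ν, IsVal k (K := K) f ν := by
  obtain ⟨n, hn⟩ : ∃ n, ∀ v, f v ≤ n := by
    obtain ⟨n, hn⟩ := (Set.finite_range f).bddAbove
    exact ⟨n, fun v => hn ⟨v, rfl⟩⟩
  obtain ⟨θ, h1, h2⟩ := exists_theta (K := K) n f hf hn
  let R := MvPolynomial (Fin m) K
  let g : R →ₐ[K] Polynomial R := MvPolynomial.aeval (fun i => θ (Pi.single i 1))
  have glin : ∀ v, g (lin k K m v) = θ v := by
    intro v
    rw [lin_apply, map_sum]
    conv_rhs => rw [pi_eq_sum_univ' v, map_sum]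
    refine Finset.sum_congr rfl fun i _ => ?_
    rw [map_smul θ, ← IsScalarTower.algebraMap_smul K (v i) (MvPolynomial.X i : MvPolynomial (Fin m) K), map_smul g,
      IsScalarTower.algebraMap_smul]
    congr 1
    exact (MvPolynomial.aeval_X _ i)
  have ginj : Function.Injective g := by
    have : ((Polynomial.aeval (1 : R)).restrictScalars K).comp g = AlgHom.id K R := by
      apply MvPolynomial.algHom_ext
      intro i
      simp only [AlgHom.comp_apply, AlgHom.id_apply]
      rw [← lin_single (k := k), glin, AlgHom.restrictScalars_apply, Polynomial.coe_aeval_eq_eval, h1]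
      rfl
    intro a b hab
    have h := congrArg ((Polynomial.aeval (1 : R)).restrictScalars K) hab
    have e := fun x => DFunLike.congr_fun this x
    simp only [AlgHom.comp_apply, AlgHom.id_apply] at e
    rwa [e, e] at h
  let L := FractionRing R
  let γ : R →+* LaurentSeries L := ((HahnSeries.ofPowerSeries ℤ L).comp
    (Polynomial.coeToPowerSeries.ringHom)).comp ((Polynomial.mapRingHom (algebraMap R L)).comp
      (g : R →+* Polynomial R))
  have γinj : Function.Injective γ := by
    refine (HahnSeries.ofPowerSeries_injective.comp (Polynomial.coe_injective L)).comp ?_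
    exact (Polynomial.map_injective _ (IsFractionRing.injective R L)).comp ginj
  let Γ : L →+* LaurentSeries L := IsFractionRing.lift γinj
  have hΓ : ∀ r, Γ (algebraMap R L r) = γ r := fun r => IsFractionRing.lift_algebraMap γinj r
  have Γ0 : ∀ a, a ≠ 0 → Γ a ≠ 0 := fun a ha => by simpa using ha
  refine ⟨fun a => (Γ a).order, ?_, ?_, ?_, ?_⟩
  · intro a b ha hb
    simp only [map_mul]
    exact HahnSeries.order_mul (Γ0 a ha) (Γ0 b hb)
  · intro a b ha hb hab
    simp only [map_add]
    apply HahnSeries.min_order_le_order_add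
    rw [← map_add]; exact Γ0 _ hab
  · intro c hc
    rw [IsScalarTower.algebraMap_apply K R L, hΓ]
    have : γ (algebraMap K R c) = HahnSeries.ofPowerSeries ℤ L ((Polynomial.X ^ 0 * Polynomial.C (algebraMap K L c) :
      Polynomial L) : PowerSeries L) := by
      simp only [γ, RingHom.comp_apply]
      congr 1
      simp only [RingHom.coe_coe, AlgHom.commutes, pow_zero, one_mul]
      rw [IsScalarTower.algebraMap_apply K R (Polynomial R)]
      simp [Polynomial.algebraMap_eq, ← IsScalarTower.algebraMap_apply K R L]
    rw [this, order_coe]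
    · simp
    · simpa using hc
  · intro v hv
    obtain ⟨q, hq, hq0⟩ := h2 v hv
    rw [hΓ]
    have : γ (lin k K m v) = HahnSeries.ofPowerSeries ℤ L ((Polynomial.X ^ (f v) * q.map (algebraMap R L) :
      Polynomial L) : PowerSeries L) := by
      simp only [γ, RingHom.comp_apply]
      congr 1
      simp [glin, hq]
    rw [this, order_coe]
    rw [Polynomial.coeff_map]
    simpa using hq0

end vals
end Drin


namespace Drin
section mono
variable {k K : Type*} [Field k] [Fintype k] [Field K] [Algebra k K] {m : ℕ}

open Classical in
/-- nonzero vectors -/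
noncomputable def nz (k : Type*) [Field k] [Fintype k] (m : ℕ) : Finset (Fin m → k) :=
  Finset.univ.filter fun v => v ≠ 0

@[simp] lemma mem_nz {v : Fin m → k} : v ∈ nz k m ↔ v ≠ 0 := by simp [nz]

/-- linear forms in the fraction field -/
noncomputable def ℓ (k K : Type*) [Field k] [Field K] [Algebra k K] {m : ℕ} (v : Fin m → k) :
    FractionRing (MvPolynomial (Fin m) K) :=
  algebraMap (MvPolynomial (Fin m) K) _ (lin k K m v)

lemma ℓ_add (u v : Fin m → k) : ℓ k K (u + v) = ℓ k K u + ℓ k K v := by simp [ℓ]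
lemma ℓ_zero : ℓ k K (0 : Fin m → k) = 0 := by simp [ℓ]
lemma ℓ_injective : Function.Injective (ℓ k K : (Fin m → k) → _) :=
  (IsFractionRing.injective (MvPolynomial (Fin m) K) _).comp lin_injective
lemma ℓ_ne_zero {v : Fin m → k} (h : v ≠ 0) : ℓ k K v ≠ 0 := by
  rw [← ℓ_zero (k := k) (K := K)]; exact fun hh => h (ℓ_injective hh)
lemma ℓ_smul (c : k) (v : Fin m → k) :
    ℓ k K (c • v) = algebraMap K _ (algebraMap k K c) * ℓ k K v := by
  simp only [ℓ, map_smul]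
  rw [IsScalarTower.algebraMap_apply K (MvPolynomial (Fin m) K)
    (FractionRing (MvPolynomial (Fin m) K)), ← map_mul]
  rw [← Algebra.smul_def, algebraMap_smul]

/-- `x` is the Laurent monomial of degree zero in linear forms with constant `c`, exponents `n` -/
structure IsMono (k : Type*) {K : Type*} [Field k] [Fintype k] [Field K] [Algebra k K] {m : ℕ}
    (x : FractionRing (MvPolynomial (Fin m) K)) (c : K) (n : (Fin m → k) → ℤ) : Prop where
  c0 : c ≠ 0
  deg : ∑ v ∈ nz k m, n v = 0
  eq : x = algebraMap K _ c * ∏ v ∈ nz k m, ℓ k K v ^ n v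

lemma IsMono.mul {x y c d} {n n' : (Fin m → k) → ℤ} (h : IsMono k (K := K) x c n)
    (h' : IsMono k y d n') :
    IsMono k (x * y) (c * d) (n + n') where
  c0 := mul_ne_zero h.c0 h'.c0
  deg := by simp [Finset.sum_add_distrib, h.deg, h'.deg]
  eq := by
    rw [h.eq, h'.eq, map_mul, mul_mul_mul_comm, ← Finset.prod_mul_distrib]
    congr 1
    refine Finset.prod_congr rfl fun v hv => ?_
    rw [Pi.add_apply, zpow_add₀ (ℓ_ne_zero (mem_nz.1 hv))]

lemma isMono_div {u v : Fin m → k} (hu : u ≠ 0) (hv : v ≠ 0) :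
    ∃ c n, IsMono k (K := K) (ℓ k K u / ℓ k K v) c n := by
  classical
  refine ⟨1, Pi.single u 1 - Pi.single v 1, one_ne_zero, ?_, ?_⟩
  · simp [Finset.sum_sub_distrib, Pi.single_apply, hu, hv]
  · rw [map_one, one_mul]
    have : ∀ w ∈ nz k m, ℓ k K w ^ ((Pi.single u 1 - Pi.single v 1 : (Fin m → k) → ℤ) w) =
      (if w = u then ℓ k K u else 1) / (if w = v then ℓ k K v else 1) := by
      intro w hw
      rw [Pi.sub_apply, zpow_sub₀ (ℓ_ne_zero (mem_nz.1 hw))]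
      congr 1
      · by_cases h : w = u
        · subst h; simp
        · simp [h]
      · by_cases h : w = v
        · subst h; simp
        · simp [h]
    rw [Finset.prod_congr rfl this, Finset.prod_div_distrib, Finset.prod_ite_eq', Finset.prod_ite_eq']
    simp [hu, hv]

lemma IsVal.one {f : (Fin m → k) → ℕ} {ν} (h : IsVal k (K := K) f ν) : ν 1 = 0 := by
  have := h.const 1 one_ne_zero
  rwa [map_one] at this

lemma IsVal.inv {f : (Fin m → k) → ℕ} {ν} (h : IsVal k (K := K) f ν) {x} (hx : x ≠ 0) :
    ν x⁻¹ = - ν x := by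
  have := h.mul x x⁻¹ hx (inv_ne_zero hx)
  rw [mul_inv_cancel₀ hx, h.one] at this
  omega

lemma IsVal.div {f : (Fin m → k) → ℕ} {ν} (h : IsVal k (K := K) f ν) {x y} (hx : x ≠ 0)
    (hy : y ≠ 0) : ν (x / y) = ν x - ν y := by
  rw [div_eq_mul_inv, h.mul _ _ hx (inv_ne_zero hy), h.inv hy]; ring

lemma IsVal.pow {f : (Fin m → k) → ℕ} {ν} (h : IsVal k (K := K) f ν) {x} (hx : x ≠ 0) (n : ℕ) :
    ν (x ^ n) = n * ν x := by
  induction n with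
  | zero => simp [h.one]
  | succ n ih => rw [pow_succ, h.mul _ _ (pow_ne_zero _ hx) hx, ih]; push_cast; ring

lemma IsVal.zpow {f : (Fin m → k) → ℕ} {ν} (h : IsVal k (K := K) f ν) {x} (hx : x ≠ 0) (n : ℤ) :
    ν (x ^ n) = n * ν x := by
  obtain ⟨n, rfl | rfl⟩ := n.eq_nat_or_neg
  · rw [zpow_natCast, h.pow hx]
  · rw [zpow_neg, zpow_natCast, h.inv (pow_ne_zero _ hx), h.pow hx]; ring

lemma IsVal.prod {f : (Fin m → k) → ℕ} {ν} (h : IsVal k (K := K) f ν)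
    {ι : Type*} (s : Finset ι) (g : ι → FractionRing (MvPolynomial (Fin m) K))
    (hg : ∀ i ∈ s, g i ≠ 0) (n : ι → ℤ) (c : K) (hc : c ≠ 0) :
    ν (algebraMap K _ c * ∏ i ∈ s, g i ^ n i) = ∑ i ∈ s, n i * ν (g i) := by
  classical
  induction s using Finset.induction_on with
  | empty => simp [h.const c hc]
  | insert a s ha ih =>
    rw [Finset.prod_insert ha, Finset.sum_insert ha, mul_left_comm,
      h.mul, ih (fun i hi => hg i (Finset.mem_insert_of_mem hi)),
      h.zpow (hg a (Finset.mem_insert_self _ _))]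
    · exact zpow_ne_zero _ (hg a (Finset.mem_insert_self _ _))
    · refine mul_ne_zero ?_ ?_
      · simpa using hc
      · rw [Finset.prod_ne_zero_iff]
        exact fun i hi => zpow_ne_zero _ (hg i (Finset.mem_insert_of_mem hi))

lemma IsVal.mono {f : (Fin m → k) → ℕ} {ν} (h : IsVal k (K := K) f ν)
    {x c} {n : (Fin m → k) → ℤ} (hx : IsMono k (K := K) x c n) :
    ν x = ∑ v ∈ nz k m, n v * f v := by
  rw [hx.eq, h.prod _ _ (fun i hi => ℓ_ne_zero (mem_nz.1 hi)) _ _ hx.c0]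
  refine Finset.sum_congr rfl fun v hv => ?_
  rw [ℓ, h.lin v (mem_nz.1 hv)]

open Classical in
/-- a canonical nonzero vector on each line -/
noncomputable def repS (W : Submodule k (Fin m → k)) : Fin m → k :=
  if h : ∃ w ∈ W, w ≠ 0 then
    (Classical.choose h : Fin m → k) else 0

/-- the canonical nonzero vector on the line of a vector -/
noncomputable def rep (v : Fin m → k) : Fin m → k := repS (Submodule.span k {v})

lemma rep_spec {v : Fin m → k} (hv : v ≠ 0) :
    rep v ∈ Submodule.span k {v} ∧ rep v ≠ 0 := by
  have h : ∃ w ∈ Submodule.span k {v}, w ≠ 0 := ⟨v, Submodule.mem_span_singleton_self v, hv⟩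
  rw [rep, repS, dif_pos h]
  exact Classical.choose_spec h

lemma rep_congr {v w : Fin m → k} (h : Submodule.span k {v} = Submodule.span k {w}) :
    rep v = rep w := by
  unfold rep; rw [h]

lemma IsMono.const_of_val {x c} {n : (Fin m → k) → ℤ} (hx : IsMono k (K := K) x c n)
    (h : ∀ y, y ≠ 0 → ∑ v ∈ nz k m, n v * (ind (Submodule.span k {y}) v : ℤ) = 0) :
    ∃ c : K, c ≠ 0 ∧ x = algebraMap K _ c := by
  classical
  have h1 : ∀ v : Fin m → k, ∃ a : k, v ≠ 0 → a ≠ 0 ∧ v = a • rep v := by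
    intro v
    by_cases hv : v = 0
    · exact ⟨0, fun h => absurd hv h⟩
    have hr := rep_spec hv
    rw [Submodule.mem_span_singleton] at hr
    obtain ⟨⟨b, hb⟩, hr0⟩ := hr
    have hb0 : b ≠ 0 := by rintro rfl; simp at hb; exact hr0 hb.symm
    exact ⟨b⁻¹, fun _ => ⟨inv_ne_zero hb0, by rw [← hb, smul_smul, inv_mul_cancel₀ hb0, one_smul]⟩⟩
  choose a ha using h1
  refine ⟨c * ∏ v ∈ nz k m, (algebraMap k K (a v)) ^ n v, ?_, ?_⟩
  · refine mul_ne_zero hx.c0 ?_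
    rw [Finset.prod_ne_zero_iff]
    intro v hv
    apply zpow_ne_zero
    simpa using (ha v (mem_nz.1 hv)).1
  · rw [hx.eq, map_mul, map_prod]
    congr 1
    have e : ∀ v ∈ nz k m, ℓ k K v ^ n v = algebraMap K (FractionRing (MvPolynomial (Fin m) K))
        ((algebraMap k K (a v)) ^ n v) * ℓ k K (rep v) ^ n v := by
      intro v hv
      have e0 := congrArg (ℓ k K) (ha v (mem_nz.1 hv)).2
      rw [ℓ_smul] at e0
      rw [e0, mul_zpow, ← map_zpow₀]
    rw [Finset.prod_congr rfl e, Finset.prod_mul_distrib]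
    have e2 : ∏ v ∈ nz k m, ℓ k K (rep v) ^ n v = 1 := by
      rw [← Finset.prod_fiberwise_of_maps_to (g := rep) (t := nz k m)
        (fun v hv => mem_nz.2 (rep_spec (mem_nz.1 hv)).2)]
      refine Finset.prod_eq_one fun w hw => ?_
      by_cases hw' : ∃ v, v ≠ 0 ∧ rep v = w
      · obtain ⟨v1, hv1, rfl⟩ := hw'
        have : ∀ v ∈ (nz k m).filter (fun v => rep v = rep v1),
            ℓ k K (rep v) ^ n v = ℓ k K (rep v1) ^ n v := by
          intro v hv; rw [(Finset.mem_filter.1 hv).2]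
        rw [Finset.prod_congr rfl this]
        have hz : ∀ (s : Finset (Fin m → k)) (z : FractionRing (MvPolynomial (Fin m) K)), z ≠ 0 →
            ∏ v ∈ s, z ^ n v = z ^ (∑ v ∈ s, n v) := by
          intro s z hz
          induction s using Finset.induction_on with
          | empty => simp
          | insert b s hb ih => rw [Finset.prod_insert hb, Finset.sum_insert hb, zpow_add₀ hz, ih]
        rw [hz _ _ (ℓ_ne_zero (mem_nz.1 hw))]
        have h2 := h v1 hv1
        have : ∑ v ∈ (nz k m).filter (fun v => rep v = rep v1), n v = 0 := by
          rw [← h2, Finset.sum_filter]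
          refine Finset.sum_congr rfl fun v hv => ?_
          have hv0 := mem_nz.1 hv
          by_cases hm : v ∈ Submodule.span k {v1}
          · rw [if_pos (rep_congr (span_eq_of_mem hv0 hm)), ind_mem hv0 hm]; simp
          · rw [if_neg, ind_nmem hm]
            · simp
            · intro hh
              apply hm
              have s1 := span_eq_of_mem (rep_spec hv0).2 (rep_spec hv0).1
              have s2 := span_eq_of_mem (rep_spec hv1).2 (rep_spec hv1).1
              rw [hh, s2] at s1
              rw [s1]; exact Submodule.mem_span_singleton_self v
        rw [this, zpow_zero]
      · rw [Finset.filter_eq_empty_iff.2]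
        · simp
        · intro v hv hh; exact hw' ⟨v, mem_nz.1 hv, hh⟩
    rw [e2, mul_one]

/-- product of all nonzero linear forms -/
noncomputable def disc (k K : Type*) [Field k] [Fintype k] [Field K] [Algebra k K] (m : ℕ) :
    MvPolynomial (Fin m) K := ∏ v ∈ nz k m, lin k K m v

lemma disc_ne_zero : disc k K m ≠ 0 := by
  rw [disc, Finset.prod_ne_zero_iff]; exact fun v hv => lin_ne_zero (mem_nz.1 hv)

lemma isMono_of_dvd {p p' : MvPolynomial (Fin m) K} {n N : ℕ}
    (hp : p.IsHomogeneous (n * (nz k m).card)) (h : p * p' = disc k K m ^ N) :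
    ∃ c e, IsMono k (K := K) (algebraMap _ (FractionRing (MvPolynomial (Fin m) K)) p /
      algebraMap _ (FractionRing (MvPolynomial (Fin m) K)) (disc k K m) ^ n) c e := by
  classical
  have h1 : p * p' = 1 * ∏ i ∈ nz k m ×ˢ Finset.range N, lin k K m i.1 := by
    rw [h, one_mul, Finset.prod_product]
    simp [disc, Finset.prod_pow]
  obtain ⟨t, u, b, c, htu, -, hbc, hpt, -⟩ := mul_eq_mul_prime_prod
    (fun i hi => (lin_irr (mem_nz.1 (Finset.mem_product.1 hi).1)).prime) h1
  have hb : IsUnit b := IsUnit.of_mul_eq_one _ hbc.symm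
  have hb' := MvPolynomial.isUnit_iff_totalDegree_of_isReduced.mp hb
  rw [MvPolynomial.totalDegree_eq_zero_iff_eq_C.1 hb'.2] at hpt
  set b0 := b.coeff 0
  have hb0 : b0 ≠ 0 := hb'.1.ne_zero
  let e : (Fin m → k) → ℕ := fun v => (t.filter (fun i => i.1 = v)).card
  have hpt' : ∏ i ∈ t, lin k K m i.1 = ∏ v ∈ nz k m, lin k K m v ^ e v := by
    rw [← Finset.prod_fiberwise_of_maps_to (g := Prod.fst) (t := nz k m)
        (fun i hi => (Finset.mem_product.1 (htu ▸ Finset.mem_union_left _ hi)).1)]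
    refine Finset.prod_congr rfl fun v hv => ?_
    rw [Finset.prod_congr rfl (g := fun _ => lin k K m v), Finset.prod_const]
    intro i hi; rw [(Finset.mem_filter.1 hi).2]
  rw [hpt'] at hpt
  have hdeg : (∑ v ∈ nz k m, e v) = n * (nz k m).card := by
    have hh : p.IsHomogeneous (0 + ∑ v ∈ nz k m, e v) := by
      rw [hpt]
      refine (MvPolynomial.isHomogeneous_C _ _).mul ?_
      refine MvPolynomial.IsHomogeneous.prod _ _ _ fun v hv => ?_
      simpa using (lin_homog v).pow (e v)
    have hp0 : p ≠ 0 := by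
      rintro rfl
      rw [zero_mul] at h
      exact pow_ne_zero _ disc_ne_zero h.symm
    have := hh.inj_right hp hp0
    omega
  refine ⟨b0, fun v => (e v : ℤ) - n, hb0, ?_, ?_⟩
  · rw [Finset.sum_sub_distrib, ← Nat.cast_sum, hdeg]; simp [mul_comm]
  · rw [hpt, disc, map_mul, map_prod, map_prod, ← Finset.prod_pow, mul_div_assoc,
      ← Finset.prod_div_distrib]
    congr 1
    refine Finset.prod_congr rfl fun v hv => ?_
    rw [zpow_sub₀ (ℓ_ne_zero (mem_nz.1 hv))]
    simp [ℓ]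

end mono
end Drin


namespace Drin
section core
variable {k K : Type*} [Field k] [Fintype k] [Field K] [Algebra k K] {m : ℕ}

/-- the linear map `u ↦ φ(u / v0)` together with its inverse counterpart -/
structure IsTw {k K : Type*} [Field k] [Fintype k] [Field K] [Algebra k K] {m : ℕ}
    (Q Q' : (Fin m → k) → FractionRing (MvPolynomial (Fin m) K)) (v0 : Fin m → k) : Prop where
  nz0 : v0 ≠ 0
  add : ∀ u v, Q (u + v) = Q u + Q v
  smul : ∀ (c : k) u, Q (c • u) = algebraMap K _ (algebraMap k K c) * Q u
  one : Q v0 = 1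
  mono : ∀ u, u ≠ 0 → ∃ c n, IsMono k (Q u) c n
  inv : ∀ u, u ≠ 0 → ∀ c n, IsMono k (Q' u) c n →
    algebraMap K _ c * ∏ v ∈ nz k m, Q v ^ n v = ℓ k K u / ℓ k K v0

variable {Q Q' : (Fin m → k) → FractionRing (MvPolynomial (Fin m) K)} {v0 : Fin m → k}

lemma IsMono.ne_zero {x c} {n : (Fin m → k) → ℤ} (hx : IsMono k (K := K) x c n) : x ≠ 0 := by
  rw [hx.eq]
  refine mul_ne_zero (by simpa using hx.c0) ?_
  rw [Finset.prod_ne_zero_iff]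
  exact fun i hi => zpow_ne_zero _ (ℓ_ne_zero (mem_nz.1 hi))

lemma IsTw.ne_zero (h : IsTw Q Q' v0) {u} (hu : u ≠ 0) : Q u ≠ 0 := by
  obtain ⟨c, n, hm⟩ := h.mono u hu
  exact hm.ne_zero

lemma IsTw.zero (h : IsTw Q Q' v0) : Q 0 = 0 := by
  have := h.add 0 0
  simpa using this

/-- `g` is the normalized pullback of `f` along `Q` -/
def Pull (Q : (Fin m → k) → FractionRing (MvPolynomial (Fin m) K)) (f g : (Fin m → k) → ℕ) : Prop :=
  IsNrm k g ∧ ∀ ν, IsVal k (K := K) f ν → ∃ s : ℤ, ∀ u, u ≠ 0 → ν (Q u) = g u + s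

lemma IsTw.val_eq (h : IsTw Q Q' v0) {f : (Fin m → k) → ℕ} {ν ν'} (h1 : IsVal k (K := K) f ν)
    (h2 : IsVal k (K := K) f ν') {u} (hu : u ≠ 0) : ν (Q u) = ν' (Q u) := by
  obtain ⟨c, n, hm⟩ := h.mono u hu
  rw [h1.mono hm, h2.mono hm]

lemma IsTw.exists_pull (h : IsTw Q Q' v0) {f : (Fin m → k) → ℕ} (hf : IsNrm k f) :
    ∃ g, Pull Q f g := by
  classical
  obtain ⟨ν, hν⟩ := exists_isVal (K := K) hf
  obtain ⟨w, hw, hmin⟩ := Finset.exists_min_image (nz k m) (fun u => ν (Q u))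
    ⟨v0, mem_nz.2 h.nz0⟩
  have hw0 := mem_nz.1 hw
  have key : ∀ u, u ≠ 0 → ν (Q u) = ((if u = 0 then 0 else (ν (Q u) - ν (Q w)).toNat : ℕ) : ℤ) + ν (Q w) := by
    intro u hu
    have := hmin u (mem_nz.2 hu)
    rw [if_neg hu]; omega
  refine ⟨fun u => if u = 0 then 0 else (ν (Q u) - ν (Q w)).toNat, ⟨?_, ?_, ?_, ?_⟩, ?_⟩
  · intro u v hu hv huv
    have h1 := hν.add (Q u) (Q v) (h.ne_zero hu) (h.ne_zero hv)
      (by rw [← h.add]; exact h.ne_zero huv)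
    rw [← h.add, key u hu, key v hv, key _ huv] at h1
    omega
  · intro c v hc hv
    have h1 := hν.mul (algebraMap K _ (algebraMap k K c)) (Q v) (by simpa using hc) (h.ne_zero hv)
    rw [← h.smul, hν.const _ (by simpa using hc)] at h1
    simp [hc, hv, h1]
  · simp
  · exact ⟨w, hw0, by simp⟩
  · intro ν' hν'
    refine ⟨ν (Q w), fun u hu => ?_⟩
    rw [h.val_eq hν' hν hu]
    exact key u hu

open Classical in
/-- the induced transformation on norms -/
noncomputable def PhiF (Q : (Fin m → k) → FractionRing (MvPolynomial (Fin m) K))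
    (f : (Fin m → k) → ℕ) : (Fin m → k) → ℕ :=
  if h : ∃ g, Pull Q f g then Classical.choose h else 0

lemma IsTw.pull (h : IsTw Q Q' v0) {f : (Fin m → k) → ℕ} (hf : IsNrm k f) :
    Pull Q f (PhiF Q f) := by
  have := h.exists_pull hf
  rw [PhiF, dif_pos this]
  exact Classical.choose_spec this

lemma IsTw.rel (h : IsTw Q Q' v0) {ι : Type*} (t : Finset ι) (f : ι → (Fin m → k) → ℕ)
    (g : (Fin m → k) → ℕ) (r s : ℕ) (hf : ∀ i ∈ t, IsNrm k (f i)) (hg : IsNrm k g)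
    (hr : ∀ v, v ≠ 0 → ∑ i ∈ t, f i v = r * g v + s) :
    ∃ s', ∀ v, v ≠ 0 → ∑ i ∈ t, PhiF Q (f i) v = r * PhiF Q g v + s' := by
  classical
  obtain ⟨μ, hμ⟩ := exists_isVal (K := K) hg
  have h1 : ∀ i, ∃ ν, i ∈ t → IsVal k (K := K) (f i) ν := by
    intro i
    by_cases hi : i ∈ t
    · obtain ⟨ν, hν⟩ := exists_isVal (K := K) (hf i hi)
      exact ⟨ν, fun _ => hν⟩
    · exact ⟨0, fun h => absurd h hi⟩
  choose ν hν using h1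
  obtain ⟨hgn, hgs⟩ := h.pull hg
  obtain ⟨sg, hsg⟩ := hgs μ hμ
  have h2 : ∀ i, ∃ s : ℤ, i ∈ t → ∀ u, u ≠ 0 → ν i (Q u) = PhiF Q (f i) u + s := by
    intro i
    by_cases hi : i ∈ t
    · obtain ⟨s, hs⟩ := (h.pull (hf i hi)).2 (ν i) (hν i hi)
      exact ⟨s, fun _ => hs⟩
    · exact ⟨0, fun h => absurd h hi⟩
  choose sf hsf using h2
  have key : ∀ u, u ≠ 0 → ((∑ i ∈ t, PhiF Q (f i) u : ℕ) : ℤ) =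
      r * PhiF Q g u + (r * sg - ∑ i ∈ t, sf i) := by
    intro u hu
    obtain ⟨c, n, hm⟩ := h.mono u hu
    have e1 : ∑ i ∈ t, ν i (Q u) = r * μ (Q u) := by
      rw [hμ.mono hm, Finset.sum_congr rfl fun i hi => (hν i hi).mono hm, Finset.sum_comm]
      have : ∀ v ∈ nz k m, ∑ i ∈ t, n v * (f i v : ℤ) = r * (n v * g v) + n v * s := by
        intro v hv
        rw [← Finset.mul_sum, ← Nat.cast_sum, hr v (mem_nz.1 hv)]
        push_cast; ring
      rw [Finset.sum_congr rfl this, Finset.sum_add_distrib, ← Finset.sum_mul, hm.deg,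
        ← Finset.mul_sum]
      ring
    rw [Finset.sum_congr rfl fun i hi => hsf i hi u hu, hsg u hu, Finset.sum_add_distrib] at e1
    push_cast
    linarith
  obtain ⟨w, hw0, hw⟩ := hgn.norm
  have hkw := key w hw0
  rw [hw] at hkw
  refine ⟨∑ i ∈ t, PhiF Q (f i) w, fun u hu => ?_⟩
  have := key u hu
  have : ((∑ i ∈ t, PhiF Q (f i) u : ℕ) : ℤ) =
      ((r * PhiF Q g u + ∑ i ∈ t, PhiF Q (f i) w : ℕ) : ℤ) := by
    rw [this, Nat.cast_add, hkw]; push_cast; ring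
  exact_mod_cast this

lemma nrm_unique {f g : (Fin m → k) → ℕ} (hf : IsNrm k f) (hg : IsNrm k g) (s : ℤ)
    (h : ∀ u, u ≠ 0 → (f u : ℤ) = g u + s) : f = g := by
  obtain ⟨a, ha0, ha⟩ := hf.norm
  obtain ⟨b, hb0, hb⟩ := hg.norm
  have h1 := h a ha0
  have h2 := h b hb0
  have : s = 0 := by omega
  funext u
  by_cases hu : u = 0
  · rw [hu, hf.zero, hg.zero]
  · have := h u hu; omega

lemma IsTw.isTrans (h : IsTw Q Q' v0) (h' : IsTw Q' Q v0) : IsTrans k (PhiF Q) (PhiF Q') where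
  nrm f hf := (h.pull hf).1
  rel t f g r s hf hg hr := h.rel t f g r s hf hg hr
  rel₂ f1 f2 g s h1 h2 hg hr := by
    obtain ⟨s', hs'⟩ := h.rel (Finset.univ : Finset Bool) (fun b => if b then f1 else f2) g 1 s
      (by simp [h1, h2]) hg (by intro v hv; simpa using hr v hv)
    exact ⟨s', fun v hv => by simpa using hs' v hv⟩
  inv f hf := by
    obtain ⟨hn1, hp1⟩ := h.pull hf
    obtain ⟨hn2, hp2⟩ := h'.pull hn1
    obtain ⟨ν, hν⟩ := exists_isVal (K := K) hf
    obtain ⟨μ, hμ⟩ := exists_isVal (K := K) hn1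
    obtain ⟨s1, hs1⟩ := hp1 ν hν
    obtain ⟨s2, hs2⟩ := hp2 μ hμ
    refine nrm_unique hn2 hf (-(f v0) - s2) ?_
    intro u hu
    have e := hs2 u hu
    obtain ⟨c, n, hm⟩ := h'.mono u hu
    have e2 := h.inv u hu c n hm
    have e3 := congrArg ν e2
    rw [hν.prod _ _ (fun i hi => h.ne_zero (mem_nz.1 hi)) _ _ hm.c0,
      hν.div (ℓ_ne_zero hu) (ℓ_ne_zero h.nz0), ℓ, ℓ, hν.lin _ hu, hν.lin _ h.nz0] at e3
    rw [hμ.mono hm] at e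
    have e4 : ∑ v ∈ nz k m, n v * ν (Q v) = ∑ v ∈ nz k m, n v * (PhiF Q f v : ℤ) := by
      have : ∀ v ∈ nz k m, n v * ν (Q v) = n v * (PhiF Q f v : ℤ) + n v * s1 := by
        intro v hv; rw [hs1 v (mem_nz.1 hv)]; ring
      rw [Finset.sum_congr rfl this, Finset.sum_add_distrib, ← Finset.sum_mul, hm.deg]; ring
    linarith

lemma IsTw.exists_tau (h : IsTw Q Q' v0) (h' : IsTw Q' Q v0) (hm : 2 ≤ m) :
    ∃ τ : (Fin m → k) → (Fin m → k), (∀ u, u ≠ 0 → τ u ≠ 0) ∧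
      (∀ u v, u ≠ 0 → v ≠ 0 → τ u ∈ Submodule.span k {τ v} → u ∈ Submodule.span k {v}) ∧
      ∀ u, u ≠ 0 → ∃ c : K, c ≠ 0 ∧ Q u = algebraMap K _ c * (ℓ k K (τ u) / ℓ k K (τ v0)) := by
  have T := h.isTrans h'
  have T' := h'.isTrans h
  have hd : 2 ≤ Module.finrank k (Fin m → k) := by simpa using hm
  have h1 : ∀ u : Fin m → k, ∃ y, u ≠ 0 → y ≠ 0 ∧ PhiF Q' (ind (Submodule.span k {u})) =
      ind (Submodule.span k {y}) := by
    intro u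
    by_cases hu : u = 0
    · exact ⟨0, fun h => absurd hu h⟩
    · obtain ⟨y, hy⟩ := map_point T' T hd hu
      exact ⟨y, fun _ => hy⟩
  choose τ hτ using h1
  have hnrm : ∀ u : Fin m → k, IsNrm k (ind (Submodule.span k {u})) := fun u =>
    isNrm_ind (span_ne_top hd u)
  have hback : ∀ u, u ≠ 0 → PhiF Q (ind (Submodule.span k {τ u})) = ind (Submodule.span k {u}) := by
    intro u hu
    rw [← (hτ u hu).2]
    exact T'.inv _ (hnrm u)
  have hiff : ∀ u v, u ≠ 0 → v ≠ 0 → (τ u ∈ Submodule.span k {τ v} ↔ u ∈ Submodule.span k {v}) := by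
    intro u v hu hv
    constructor
    · intro hh
      have e := hback u hu
      rw [span_eq_of_mem (hτ u hu).1 hh, hback v hv] at e
      have : Submodule.span k {v} = Submodule.span k {u} := ind_inj e
      rw [this]; exact Submodule.mem_span_singleton_self u
    · intro hh
      have e := (hτ u hu).2
      rw [span_eq_of_mem hu hh, (hτ v hv).2] at e
      have : Submodule.span k {τ v} = Submodule.span k {τ u} := ind_inj e
      rw [this]; exact Submodule.mem_span_singleton_self _
  refine ⟨τ, fun u hu => (hτ u hu).1, fun u v hu hv => (hiff u v hu hv).1, ?_⟩
  intro u hu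
  have hτu := (hτ u hu).1
  have hτ0 := (hτ v0 h.nz0).1
  obtain ⟨c1, n1, m1⟩ := h.mono u hu
  obtain ⟨c2, n2, m2⟩ := isMono_div (K := K) hτ0 hτu
  have m3 := m1.mul m2
  obtain ⟨c, hc, hcx⟩ := m3.const_of_val (by
    intro y hy
    obtain ⟨x, hx, hxy⟩ := map_point T T' hd hy
    have hyx : Submodule.span k {τ x} = Submodule.span k {y} := by
      apply ind_inj
      rw [← (hτ x hx).2, ← hxy]
      exact T.inv _ (hnrm y)
    obtain ⟨ν, hν⟩ := exists_isVal (K := K) (hnrm y)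
    rw [← hν.mono m3, hν.mul _ _ m1.ne_zero m2.ne_zero,
      hν.div (ℓ_ne_zero hτ0) (ℓ_ne_zero hτu), ℓ, ℓ, hν.lin _ hτu, hν.lin _ hτ0]
    obtain ⟨s, hs⟩ := (h.pull (hnrm y)).2 ν hν
    have a1 := hs u hu
    have a2 := hs v0 h.nz0
    rw [h.one, hν.one] at a2
    rw [hxy] at a1 a2
    have key : ∀ w, w ≠ 0 → ind (Submodule.span k {x}) w = ind (Submodule.span k {y}) (τ w) := by
      intro w hw
      rw [← hyx]
      by_cases hwx : w ∈ Submodule.span k {x}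
      · rw [ind_mem hw hwx, ind_mem (hτ w hw).1 ((hiff w x hw hx).2 hwx)]
      · rw [ind_nmem hwx, ind_nmem (fun hh => hwx ((hiff w x hw hx).1 hh))]
    rw [key _ hu] at a1
    rw [key _ h.nz0] at a2
    omega)
  refine ⟨c, hc, ?_⟩
  rw [← hcx, mul_assoc, div_mul_div_cancel₀ (ℓ_ne_zero hτu), div_self (ℓ_ne_zero hτ0), mul_one]

/-- evaluation at the rational point given by a functional -/
noncomputable def evalAt (K : Type*) [Field K] [Algebra k K] (lam : (Fin m → k) →ₗ[k] k) :
    MvPolynomial (Fin m) K →ₐ[K] K :=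
  MvPolynomial.aeval fun i => algebraMap k K (lam (Pi.single i 1))

lemma evalAt_lin (lam : (Fin m → k) →ₗ[k] k) (v : Fin m → k) :
    evalAt K lam (lin k K m v) = algebraMap k K (lam v) := by
  rw [lin_apply, map_sum]
  conv_rhs => rw [pi_eq_sum_univ' v, map_sum, map_sum]
  refine Finset.sum_congr rfl fun i _ => ?_
  rw [map_smul lam, ← IsScalarTower.algebraMap_smul K (v i) (MvPolynomial.X i : MvPolynomial (Fin m) K),
    map_smul]
  simp [evalAt]

lemma IsTw.exists_T (h : IsTw Q Q' v0) (h' : IsTw Q' Q v0) :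
    ∃ T : (Fin m → k) ≃ₗ[k] (Fin m → k), ∀ u, Q u = ℓ k K (T u) / ℓ k K (T v0) := by
  by_cases hm : 2 ≤ m
  · obtain ⟨τ, hτ0, hτ1, hτ2⟩ := h.exists_tau h' hm
    have hg0 := hτ0 v0 h.nz0
    have ht : ∀ u, u ≠ 0 → ∃ c : K, c ≠ 0 ∧ Q u * ℓ k K (τ v0) = algebraMap K _ c * ℓ k K (τ u) := by
      intro u hu
      obtain ⟨c, hc, e⟩ := hτ2 u hu
      refine ⟨c, hc, ?_⟩
      rw [e, mul_assoc, div_mul_cancel₀ _ (ℓ_ne_zero hg0)]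
    have key : ∀ u, ∃ w, Q u * ℓ k K (τ v0) = ℓ k K w := by
      intro u
      by_cases hu : u = 0
      · exact ⟨0, by rw [hu, h.zero, zero_mul, ℓ_zero]⟩
      by_cases hp : u ∈ Submodule.span k {v0}
      · obtain ⟨a, rfl⟩ := Submodule.mem_span_singleton.1 hp
        exact ⟨a • τ v0, by rw [h.smul, h.one, mul_one, ℓ_smul]⟩
      have hsum : u + v0 ≠ 0 := by
        intro hh
        apply hp
        rw [eq_neg_of_add_eq_zero_left hh]
        exact Submodule.neg_mem _ (Submodule.mem_span_singleton_self v0)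
      obtain ⟨cu, hcu, eu⟩ := ht u hu
      obtain ⟨c, hc, e⟩ := ht (u + v0) hsum
      have hnm : τ v0 ∉ Submodule.span k {τ u} := by
        intro hh
        exact hp (mem_span_symm h.nz0 (hτ1 v0 u h.nz0 hu hh))
      obtain ⟨lam, hl1, hl2⟩ := Submodule.exists_le_ker_of_notMem hnm
      have hl3 : lam (τ u) = 0 := hl2 (Submodule.mem_span_singleton_self _)
      have erel : MvPolynomial.C c * lin k K m (τ (u + v0)) =
          MvPolynomial.C cu * lin k K m (τ u) + lin k K m (τ v0) := by
        apply IsFractionRing.injective (MvPolynomial (Fin m) K)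
          (FractionRing (MvPolynomial (Fin m) K))
        have := e
        rw [h.add, add_mul, eu, h.one, one_mul] at this
        rw [IsScalarTower.algebraMap_apply K (MvPolynomial (Fin m) K)
          (FractionRing (MvPolynomial (Fin m) K)), IsScalarTower.algebraMap_apply K (MvPolynomial (Fin m) K)
          (FractionRing (MvPolynomial (Fin m) K))] at this
        simp only [map_mul, map_add]
        exact this.symm
      have ev := congrArg (evalAt K lam) erel
      rw [map_mul, map_add, map_mul, evalAt_lin, evalAt_lin, evalAt_lin, hl3, map_zero, mul_zero,
        zero_add] at ev
      have evc : evalAt K lam (MvPolynomial.C c) = c := by simp [evalAt]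
      rw [evc] at ev
      have hne : lam (τ (u + v0)) ≠ 0 := by
        intro h0
        rw [h0, map_zero, mul_zero] at ev
        exact hl1 ((algebraMap k K).injective (by rw [← ev, map_zero]))
      have hcc : c = algebraMap k K (lam (τ v0) / lam (τ (u + v0))) := by
        rw [map_div₀, eq_div_iff, ev]
        simpa using hne
      refine ⟨(lam (τ v0) / lam (τ (u + v0))) • τ (u + v0) - τ v0, ?_⟩
      rw [sub_eq_add_neg, ← neg_one_smul k (τ v0), ℓ_add, ℓ_smul, ← hcc, ← e, h.add, h.one, ℓ_smul]
      simp; ring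
    choose T hT using key
    have hadd : ∀ u v, T (u + v) = T u + T v := by
      intro u v
      apply ℓ_injective (K := K)
      rw [ℓ_add, ← hT, ← hT, ← hT, h.add, add_mul]
    have hsmul : ∀ (c : k) u, T (c • u) = c • T u := by
      intro c u
      apply ℓ_injective (K := K)
      rw [ℓ_smul, ← hT, ← hT, h.smul, mul_assoc]
    let T0 : (Fin m → k) →ₗ[k] (Fin m → k) := ⟨⟨T, hadd⟩, hsmul⟩
    have hinj : Function.Injective T0 := by
      rw [← LinearMap.ker_eq_bot, LinearMap.ker_eq_bot']
      intro u hu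
      by_contra hu0
      have := hT u
      rw [show T u = 0 from hu, ℓ_zero] at this
      exact mul_ne_zero (h.ne_zero hu0) (ℓ_ne_zero hg0) this
    refine ⟨LinearEquiv.ofInjectiveEndo T0 hinj, fun u => ?_⟩
    change Q u = ℓ k K (T u) / ℓ k K (T v0)
    rw [← hT, ← hT, h.one, one_mul, mul_div_cancel_right₀ (Q u) (ℓ_ne_zero (K := K) hg0)]
  · refine ⟨LinearEquiv.refl k _, fun u => ?_⟩
    have hu : ∃ c : k, u = c • v0 := by
      obtain ⟨i, hi⟩ := Function.ne_iff.1 h.nz0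
      have hm1 : ∀ j : Fin m, j = i := by intro j; ext; have := j.2; have := i.2; omega
      refine ⟨u i / v0 i, ?_⟩
      funext j
      rw [hm1 j]
      have : v0 i ≠ 0 := hi
      simp [this]
    obtain ⟨c, rfl⟩ := hu
    simp only [LinearEquiv.refl_apply]
    rw [ℓ_smul, mul_div_assoc, div_self (ℓ_ne_zero h.nz0), h.smul, h.one]

end core
end Drin


namespace Drin
section coreB
variable {k K : Type*} [Field k] [Fintype k] [Field K] [Algebra k K] {m : ℕ}

lemma map_units_prod {B F : Type*} [CommRing B] [Field F] (g : B →+* F) {ι : Type*} (s : Finset ι)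
    (β : ι → Bˣ) (n : ι → ℤ) :
    g ((∏ i ∈ s, β i ^ n i : Bˣ) : B) = ∏ i ∈ s, g (β i) ^ n i := by
  have h1 : g ((∏ i ∈ s, β i ^ n i : Bˣ) : B) =
    ((Units.map (g : B →* F) (∏ i ∈ s, β i ^ n i) : Fˣ) : F) := rfl
  rw [h1, map_prod, Units.coe_prod]
  refine Finset.prod_congr rfl fun i _ => ?_
  rw [map_zpow, Units.val_zpow_eq_zpow_val]
  rfl

variable {B : Type*} [CommRing B] [Algebra K B]
  (j : B →ₐ[K] FractionRing (MvPolynomial (Fin m) K))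

lemma isTw_of (hj : Function.Injective j)
    (hS : ∀ b, ∃ (n : ℕ) (p : MvPolynomial (Fin m) K), p.IsHomogeneous (n * (nz k m).card) ∧
      j b * algebraMap _ (FractionRing (MvPolynomial (Fin m) K)) (disc k K m) ^ n = algebraMap _ _ p)
    (hfrac : ∀ u v : Fin m → k, v ≠ 0 → ∃ b, j b = ℓ k K u / ℓ k K v)
    (φ : B ≃ₐ[K] B) (v0 : Fin m → k) (hv0 : v0 ≠ 0) (b : (Fin m → k) → B)
    (hb : ∀ u, j (b u) = ℓ k K u / ℓ k K v0) :
    IsTw (fun u => j (φ (b u))) (fun u => j (φ.symm (b u))) v0 := by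
  classical
  have hu : ∀ u, u ≠ 0 → ∃ b', b u * b' = 1 := by
    intro u hu
    obtain ⟨b', hb'⟩ := hfrac v0 u hu
    refine ⟨b', hj ?_⟩
    rw [map_mul, hb, hb', map_one, div_mul_div_cancel₀ (ℓ_ne_zero hv0), div_self (ℓ_ne_zero hu)]
  refine ⟨hv0, ?_, ?_, ?_, ?_, ?_⟩
  · intro u v
    rw [← map_add, ← map_add]
    congr 2
    apply hj
    rw [map_add, hb, hb, hb, ℓ_add, add_div]
  · intro c u
    have : b (c • u) = algebraMap K B (algebraMap k K c) * b u := by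
      apply hj
      rw [map_mul, hb, hb, ℓ_smul, AlgHom.commutes, mul_div_assoc]
    simp only [this, map_mul, AlgEquiv.commutes, AlgHom.commutes]
  · have : b v0 = 1 := by
      apply hj
      rw [hb, div_self (ℓ_ne_zero hv0), map_one]
    simp [this]
  · intro u hu0
    obtain ⟨b', hb'⟩ := hu u hu0
    obtain ⟨n, p, hp, hnp⟩ := hS (φ (b u))
    obtain ⟨n', p', hp', hnp'⟩ := hS (φ b')
    have hd : algebraMap _ (FractionRing (MvPolynomial (Fin m) K)) (disc k K m) ≠ 0 := by
      simpa using disc_ne_zero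
    have hpp : p * p' = disc k K m ^ (n + n') := by
      apply IsFractionRing.injective (MvPolynomial (Fin m) K)
          (FractionRing (MvPolynomial (Fin m) K))
      rw [map_mul, ← hnp, ← hnp', mul_mul_mul_comm, ← map_mul, ← map_mul, hb', map_one, map_one,
        one_mul, map_pow, pow_add]
    obtain ⟨c, e, hm⟩ := isMono_of_dvd hp hpp
    refine ⟨c, e, ?_⟩
    rwa [← hnp, mul_div_cancel_right₀ _ (pow_ne_zero n hd)] at hm
  · intro u hu0 c n hm
    let β : (Fin m → k) → Bˣ := fun v =>
      if h : v ≠ 0 then ⟨b v, Classical.choose (hu v h), Classical.choose_spec (hu v h),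
        by rw [mul_comm]; exact Classical.choose_spec (hu v h)⟩ else 1
    have hβ : ∀ v, v ≠ 0 → (β v : B) = b v := by
      intro v hv; simp only [β, dif_pos hv]
    let y : B := algebraMap K B c * ((∏ v ∈ nz k m, β v ^ n v : Bˣ) : B)
    have hy : j y = j (φ.symm (b u)) := by
      rw [hm.eq]
      simp only [y, map_mul, AlgHom.commutes]
      congr 1
      refine (map_units_prod (j : B →+* FractionRing (MvPolynomial (Fin m) K)) _ _ _).trans ?_
      have e : ∀ v ∈ nz k m, (j : B →+* FractionRing (MvPolynomial (Fin m) K)) (β v : B) ^ n v = ℓ k K v ^ n v * (ℓ k K v0 ^ n v)⁻¹ := by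
        intro v hv
        rw [hβ v (mem_nz.1 hv), RingHom.coe_coe, hb, div_zpow, div_eq_mul_inv]
      rw [Finset.prod_congr rfl e, Finset.prod_mul_distrib, Finset.prod_inv_distrib]
      have hz : ∀ (s : Finset (Fin m → k)), ∏ v ∈ s, ℓ k K v0 ^ n v = ℓ k K v0 ^ (∑ v ∈ s, n v) := by
        intro s
        induction s using Finset.induction_on with
        | empty => simp
        | insert b s hb ih =>
          rw [Finset.prod_insert hb, Finset.sum_insert hb, zpow_add₀ (ℓ_ne_zero hv0), ih]
      rw [hz, hm.deg, zpow_zero, inv_one, mul_one]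
    have hy2 : φ y = b u := by rw [hj hy, AlgEquiv.apply_symm_apply]
    rw [← hb, ← hy2]
    simp only [y, map_mul, AlgEquiv.commutes, AlgHom.commutes]
    congr 1
    refine Eq.trans ?_ (map_units_prod ((j : B →+* FractionRing (MvPolynomial (Fin m) K)).comp
      (φ : B →+* B)) _ _ _).symm
    refine Finset.prod_congr rfl fun v hv => ?_
    rw [hβ v (mem_nz.1 hv)]; rfl

theorem core_B (hj : Function.Injective j)
    (hS : ∀ b, ∃ (n : ℕ) (p : MvPolynomial (Fin m) K), p.IsHomogeneous (n * (nz k m).card) ∧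
      j b * algebraMap _ (FractionRing (MvPolynomial (Fin m) K)) (disc k K m) ^ n = algebraMap _ _ p)
    (hfrac : ∀ u v : Fin m → k, v ≠ 0 → ∃ b, j b = ℓ k K u / ℓ k K v)
    (φ : B ≃ₐ[K] B) :
    ∃ T : (Fin m → k) ≃ₗ[k] (Fin m → k), ∀ u v b, v ≠ 0 → j b = ℓ k K u / ℓ k K v →
      j (φ b) = ℓ k K (T u) / ℓ k K (T v) := by
  by_cases hm : ∃ v0 : Fin m → k, v0 ≠ 0
  · obtain ⟨v0, hv0⟩ := hm
    choose b hb using fun u => hfrac u v0 hv0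
    have h1 := isTw_of j hj hS hfrac φ v0 hv0 b hb
    have h2 := isTw_of j hj hS hfrac φ.symm v0 hv0 b hb
    obtain ⟨T, hT⟩ := h1.exists_T h2
    refine ⟨T, fun u v x hv hx => ?_⟩
    have hxv : x * b v = b u := by
      apply hj
      rw [map_mul, hx, hb, hb, div_mul_div_cancel₀ (ℓ_ne_zero hv)]
    have e1 := hT u
    have e2 := hT v
    rw [← hxv, map_mul, map_mul, e2] at e1
    have hTv : ℓ k K (T v) ≠ 0 := ℓ_ne_zero (by simpa using hv)
    have hT0 : ℓ k K (T v0) ≠ 0 := ℓ_ne_zero (by simpa using hv0)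
    field_simp at e1
    rw [eq_div_iff hTv]
    exact e1
  · push Not at hm
    exact ⟨LinearEquiv.refl _ _, fun u v b hv => absurd (hm v) hv⟩

end coreB
end Drin


namespace Drin
open TensorProduct
section alg
variable {k K : Type*} [Field k] [Fintype k] [Field K] [Algebra k K] {m : ℕ}

/-- the embedding of polynomials over `k` into the fraction field -/
noncomputable def emb (k K : Type*) [Field k] [Field K] [Algebra k K] (m : ℕ) :
    MvPolynomial (Fin m) k →+* FractionRing (MvPolynomial (Fin m) K) :=
  (algebraMap (MvPolynomial (Fin m) K) (FractionRing (MvPolynomial (Fin m) K))).comp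
    (MvPolynomial.map (algebraMap k K))

lemma map_lin (v : Fin m → k) : MvPolynomial.map (algebraMap k K) (lin k k m v) = lin k K m v := by
  rw [lin_apply, lin_apply, map_sum]
  refine Finset.sum_congr rfl fun i _ => ?_
  rw [MvPolynomial.smul_eq_C_mul, map_mul, MvPolynomial.map_C, MvPolynomial.map_X,
    ← MvPolynomial.smul_eq_C_mul, algebraMap_smul]

lemma emb_lin (v : Fin m → k) : emb k K m (lin k k m v) = ℓ k K v := by
  rw [emb, RingHom.comp_apply, map_lin, ℓ]

lemma map_disc : MvPolynomial.map (algebraMap k K) (disc k k m) = disc k K m := by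
  rw [disc, disc, map_prod]
  exact Finset.prod_congr rfl fun v _ => map_lin v

lemma emb_disc : emb k K m (disc k k m) = algebraMap _ _ (disc k K m) := by
  rw [emb, RingHom.comp_apply, map_disc]

lemma emb_injective : Function.Injective (emb k K m) :=
  (IsFractionRing.injective _ _).comp (MvPolynomial.map_injective _ (algebraMap k K).injective)

lemma emb_C (c : k) : emb k K m (MvPolynomial.C c) = algebraMap k _ c := by
  rw [emb, RingHom.comp_apply, MvPolynomial.map_C,
    IsScalarTower.algebraMap_apply k K (FractionRing (MvPolynomial (Fin m) K)),
    IsScalarTower.algebraMap_apply K (MvPolynomial (Fin m) K) (FractionRing (MvPolynomial (Fin m) K))]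
  rfl

lemma disc_homog : (disc k K m).IsHomogeneous (nz k m).card := by
  have := MvPolynomial.IsHomogeneous.prod (nz k m) (fun v => lin k K m v) (fun _ => 1)
    (fun v _ => lin_homog v)
  simpa [disc] using this

/-- substitution attached to a linear automorphism -/
noncomputable def sub (T : (Fin m → k) ≃ₗ[k] (Fin m → k)) :
    MvPolynomial (Fin m) k →ₐ[k] MvPolynomial (Fin m) k :=
  MvPolynomial.aeval fun i => lin k k m (T (Pi.single i 1))

lemma sub_lin (T : (Fin m → k) ≃ₗ[k] (Fin m → k)) (v : Fin m → k) :
    sub T (lin k k m v) = lin k k m (T v) := by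
  rw [lin_apply, map_sum]
  conv_rhs => rw [pi_eq_sum_univ' v, map_sum, map_sum]
  refine Finset.sum_congr rfl fun i _ => ?_
  rw [map_smul, map_smul, map_smul]
  simp [sub]

lemma sub_disc (T : (Fin m → k) ≃ₗ[k] (Fin m → k)) : sub T (disc k k m) = disc k k m := by
  rw [disc, map_prod]
  refine Finset.prod_bij (fun v _ => T v) ?_ ?_ ?_ ?_
  · intro v hv; simpa using hv
  · intro a _ b _ h; exact T.injective h
  · intro b hb; exact ⟨T.symm b, by simpa using hb, by simp⟩
  · intro v _; exact sub_lin T v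

lemma sub_homog (T : (Fin m → k) ≃ₗ[k] (Fin m → k)) {p : MvPolynomial (Fin m) k} {n : ℕ}
    (hp : p.IsHomogeneous n) : (sub T p).IsHomogeneous n := by
  have := hp.aeval (fun i => lin k k m (T (Pi.single i 1))) (n := 1) (fun i => lin_homog _)
  simpa [sub] using this

lemma sub_comp (T S : (Fin m → k) ≃ₗ[k] (Fin m → k)) (h : ∀ v, T (S v) = v) :
    (sub T).comp (sub S) = AlgHom.id k _ := by
  apply MvPolynomial.algHom_ext
  intro i
  rw [AlgHom.comp_apply, ← lin_single (k := k), sub_lin, sub_lin, h]; rfl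

lemma aeval_scale {F : Type*} [CommRing F] [Algebra k F] {p : MvPolynomial (Fin m) k} {n : ℕ}
    (hp : p.IsHomogeneous n) (c : F) (y : Fin m → F) :
    MvPolynomial.aeval (fun i => c * y i) p = c ^ n * MvPolynomial.aeval y p := by
  rw [MvPolynomial.aeval_def, MvPolynomial.aeval_def, MvPolynomial.eval₂_eq, MvPolynomial.eval₂_eq,
    Finset.mul_sum]
  refine Finset.sum_congr rfl fun d hd => ?_
  have hdeg := hp (MvPolynomial.mem_support_iff.1 hd)
  simp only [mul_pow, Finset.prod_mul_distrib, Finset.prod_pow_eq_pow_sum]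
  rw [show ∑ i ∈ d.support, d i = n from by
    rw [← hdeg, Finsupp.weight_apply]; simp [Finsupp.sum]]
  ring

lemma aeval_emb (T : (Fin m → k) ≃ₗ[k] (Fin m → k)) (p : MvPolynomial (Fin m) k) :
    MvPolynomial.aeval (fun i => ℓ k K (T (Pi.single i 1))) p = emb k K m (sub T p) := by
  induction p using MvPolynomial.induction_on with
  | C a =>
    rw [MvPolynomial.aeval_C, MvPolynomial.algHom_C, MvPolynomial.algebraMap_eq, emb_C]
  | add p q hp hq => rw [map_add, map_add, map_add, hp, hq]
  | mul_X p i hp =>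
    rw [map_mul, map_mul, map_mul, hp, MvPolynomial.aeval_X]
    congr 1
    rw [← emb_lin, ← sub_lin, lin_single]

variable {A : Type*} [CommRing A] [Algebra k A]
  (jA : A →ₐ[k] FractionRing (MvPolynomial (Fin m) K))

/-- extension of `jA` to the base change -/
noncomputable def jB : K ⊗[k] A →ₐ[K] FractionRing (MvPolynomial (Fin m) K) :=
  Algebra.TensorProduct.lift (Algebra.ofId K _) jA (fun _ _ => Commute.all _ _)

lemma jB_tmul (c : K) (a : A) : jB jA (c ⊗ₜ a) = algebraMap K _ c * jA a := by
  simp [jB, Algebra.ofId_apply]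

/-- the property that every element is a fraction with denominator a power of the discriminant -/
def HA (jA : A →ₐ[k] FractionRing (MvPolynomial (Fin m) K)) : Prop :=
  ∀ a, ∃ (n : ℕ) (p : MvPolynomial (Fin m) k), p.IsHomogeneous (n * (nz k m).card) ∧
      jA a * emb k K m (disc k k m) ^ n = emb k K m p

variable {jA}

lemma emb_disc_ne : emb k K m (disc k k m) ≠ 0 := by
  rw [emb_disc]; simpa using disc_ne_zero

lemma HA.uniform (h : HA jA) {ι : Type*} (s : Finset ι) (a : ι → A) :
    ∃ N, ∀ i ∈ s, ∃ p, jA (a i) * emb k K m (disc k k m) ^ N = emb k K m p := by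
  classical
  choose n p hp hnp using h
  refine ⟨∑ i ∈ s, n (a i), fun i hi => ?_⟩
  refine ⟨p (a i) * disc k k m ^ (∑ i ∈ s, n (a i) - n (a i)), ?_⟩
  rw [map_mul, ← hnp, map_pow, mul_assoc, ← pow_add]
  congr 2
  have := Finset.single_le_sum (f := fun i => n (a i)) (fun _ _ => Nat.zero_le _) hi
  omega

lemma jB_injective (h : HA jA) (hj : Function.Injective jA) : Function.Injective (jB jA) := by
  rw [injective_iff_map_eq_zero]
  intro x hx
  let bas := Module.Basis.ofVectorSpace k K
  obtain ⟨c, rfl⟩ := TensorProduct.eq_repr_basis_left bas x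
  rw [Finsupp.sum, map_sum] at hx
  simp only [jB_tmul] at hx
  obtain ⟨N, hN⟩ := h.uniform c.support c
  have : ∀ i, ∃ p, i ∈ c.support → jA (c i) * emb k K m (disc k k m) ^ N = emb k K m p := by
    intro i
    by_cases hi : i ∈ c.support
    · obtain ⟨p, hp⟩ := hN i hi; exact ⟨p, fun _ => hp⟩
    · exact ⟨0, fun h => absurd h hi⟩
  choose p hp using this
  have h2 : ∑ i ∈ c.support, MvPolynomial.C (bas i) * MvPolynomial.map (algebraMap k K) (p i) = 0 := by
    apply IsFractionRing.injective (MvPolynomial (Fin m) K)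
          (FractionRing (MvPolynomial (Fin m) K))
    rw [map_zero, map_sum, ← zero_mul (emb k K m (disc k k m) ^ N), ← hx, Finset.sum_mul]
    refine Finset.sum_congr rfl fun i hi => ?_
    rw [mul_assoc, hp i hi, map_mul, emb, RingHom.comp_apply]
    rfl
  have h3 : ∀ i ∈ c.support, p i = 0 := by
    intro i hi
    ext d
    have h4 := congrArg (MvPolynomial.coeff d) h2
    rw [MvPolynomial.coeff_sum] at h4
    simp only [MvPolynomial.coeff_C_mul, MvPolynomial.coeff_map, MvPolynomial.coeff_zero] at h4
    have h5 := linearIndependent_iff'.1 bas.linearIndependent c.support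
      (fun i => MvPolynomial.coeff d (p i)) (by
        rw [← h4]
        refine Finset.sum_congr rfl fun i _ => ?_
        rw [Algebra.smul_def, mul_comm])
    rw [h5 i hi, MvPolynomial.coeff_zero]
  rw [Finsupp.sum]
  refine Finset.sum_eq_zero fun i hi => ?_
  have h4 := hp i hi
  rw [h3 i hi, map_zero] at h4
  have h5 : jA (c i) = 0 := by
    rcases mul_eq_zero.1 h4 with h | h
    · exact h
    · exact absurd h (pow_ne_zero _ emb_disc_ne)
  rw [hj (h5.trans (map_zero jA).symm), TensorProduct.tmul_zero]

lemma jB_hS (h : HA jA) (b : K ⊗[k] A) :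
    ∃ (n : ℕ) (p : MvPolynomial (Fin m) K), p.IsHomogeneous (n * (nz k m).card) ∧
      jB jA b * algebraMap _ (FractionRing (MvPolynomial (Fin m) K)) (disc k K m) ^ n
        = algebraMap _ _ p := by
  induction b using TensorProduct.induction_on with
  | zero => exact ⟨0, 0, MvPolynomial.isHomogeneous_zero _ _ _, by simp⟩
  | tmul c a =>
    obtain ⟨n, p, hp, e⟩ := h a
    refine ⟨n, MvPolynomial.C c * MvPolynomial.map (algebraMap k K) p, ?_, ?_⟩
    · have := (MvPolynomial.isHomogeneous_C (Fin m) c).mul (hp.map (algebraMap k K))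
      rwa [zero_add] at this
    · rw [jB_tmul, ← emb_disc, mul_assoc, e, map_mul]
      rfl
  | add x y hx hy =>
    obtain ⟨n, p, hp, e⟩ := hx
    obtain ⟨n', p', hp', e'⟩ := hy
    refine ⟨n + n', p * disc k K m ^ n' + p' * disc k K m ^ n, ?_, ?_⟩
    · apply MvPolynomial.IsHomogeneous.add
      · convert hp.mul (disc_homog.pow n') using 1; ring
      · convert hp'.mul (disc_homog.pow n) using 1; ring
    · rw [map_add, map_add, map_mul, map_mul, ← e, ← e', map_pow, map_pow]; ring

theorem core_A (h : HA jA) (hj : Function.Injective jA)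
    (hfrac : ∀ u v : Fin m → k, v ≠ 0 → ∃ a, jA a = ℓ k K u / ℓ k K v)
    (v0 : Fin m → k) (hv0 : v0 ≠ 0)
    (φ : K ⊗[k] A ≃ₐ[K] K ⊗[k] A) :
    ∃ T : (Fin m → k) ≃ₗ[k] (Fin m → k), ∀ (a a' : A) (n : ℕ) (p : MvPolynomial (Fin m) k),
      p.IsHomogeneous (n * (nz k m).card) →
      jA a * emb k K m (disc k k m) ^ n = emb k K m p →
      jA a' * emb k K m (disc k k m) ^ n = emb k K m (sub T p) → φ (1 ⊗ₜ a) = 1 ⊗ₜ a' := by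
  have hB := jB_injective h hj
  have hfr : ∀ u v : Fin m → k, v ≠ 0 → ∃ b, jB jA b = ℓ k K u / ℓ k K v := by
    intro u v hv
    obtain ⟨a, ha⟩ := hfrac u v hv
    exact ⟨1 ⊗ₜ a, by rw [jB_tmul, map_one, one_mul, ha]⟩
  obtain ⟨T, hT⟩ := core_B (jB jA) hB (jB_hS h) hfr φ
  refine ⟨T, fun a a' n p hp e e' => ?_⟩
  choose x hx using fun i : Fin m => hfrac (Pi.single i 1) v0 hv0
  have hxT : ∀ i, jB jA (φ (1 ⊗ₜ x i)) = (ℓ k K (T v0))⁻¹ * ℓ k K (T (Pi.single i 1)) := by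
    intro i
    rw [hT (Pi.single i 1) v0 (1 ⊗ₜ x i) hv0 (by rw [jB_tmul, map_one, one_mul, hx]), div_eq_inv_mul]
  have hxT' : ∀ i, jB jA (1 ⊗ₜ x i) = (ℓ k K v0)⁻¹ * ℓ k K ((LinearEquiv.refl k (Fin m → k)) (Pi.single i 1)) := by
    intro i
    rw [jB_tmul, map_one, one_mul, hx, div_eq_inv_mul]; rfl
  have hTv0 : ℓ k K (T v0) ≠ 0 := ℓ_ne_zero (by simpa using hv0)
  -- the two algebra homs
  let g1 : K ⊗[k] A →ₐ[k] FractionRing (MvPolynomial (Fin m) K) := (jB jA).restrictScalars k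
  let g2 : K ⊗[k] A →ₐ[k] FractionRing (MvPolynomial (Fin m) K) :=
    ((jB jA).comp (φ : K ⊗[k] A →ₐ[K] K ⊗[k] A)).restrictScalars k
  let P : MvPolynomial (Fin m) k →ₐ[k] K ⊗[k] A := MvPolynomial.aeval fun i => (1 : K) ⊗ₜ x i
  have hP1 : ∀ (q : MvPolynomial (Fin m) k) (d : ℕ), q.IsHomogeneous d →
      jB jA (P q) = ((ℓ k K v0)⁻¹) ^ d * emb k K m q := by
    intro q d hq
    have : jB jA (P q) = (g1.comp P) q := rfl
    rw [this, MvPolynomial.comp_aeval]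
    have e2 : (fun i => g1 ((1 : K) ⊗ₜ x i)) = fun i => (ℓ k K v0)⁻¹ * ℓ k K ((LinearEquiv.refl k (Fin m → k)) (Pi.single i 1)) := by
      funext i; exact hxT' i
    rw [e2, aeval_scale hq, aeval_emb]
    congr 2
    have := sub_comp (LinearEquiv.refl k (Fin m → k)) (LinearEquiv.refl k (Fin m → k)) (fun v => rfl)
    have e3 : sub (LinearEquiv.refl k (Fin m → k)) = AlgHom.id k _ := by
      apply MvPolynomial.algHom_ext
      intro i
      rw [← lin_single (k := k), sub_lin]; rfl
    rw [e3]; rfl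
  have hP2 : ∀ (q : MvPolynomial (Fin m) k) (d : ℕ), q.IsHomogeneous d →
      jB jA (φ (P q)) = ((ℓ k K (T v0))⁻¹) ^ d * emb k K m (sub T q) := by
    intro q d hq
    have : jB jA (φ (P q)) = (g2.comp P) q := rfl
    rw [this, MvPolynomial.comp_aeval]
    have e2 : (fun i => g2 ((1 : K) ⊗ₜ x i)) = fun i => (ℓ k K (T v0))⁻¹ * ℓ k K (T (Pi.single i 1)) := by
      funext i; exact hxT i
    rw [e2, aeval_scale hq, aeval_emb]
  have rel : (1 ⊗ₜ a) * P (disc k k m) ^ n = P p := by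
    apply hB
    rw [map_mul, map_pow, hP1 _ _ hp, hP1 _ _ disc_homog, jB_tmul, map_one, one_mul, mul_pow, ← e,
      ← pow_mul, mul_comm n]
    ring
  have rel2 := congrArg (fun z => jB jA (φ z)) rel
  simp only [map_mul, map_pow] at rel2
  rw [hP2 _ _ hp, hP2 _ _ disc_homog, sub_disc, mul_pow, ← pow_mul, mul_comm (nz k m).card, ← e'] at rel2
  apply hB
  rw [jB_tmul _ _ a', map_one, one_mul]
  have hne : ((ℓ k K (T v0))⁻¹) ^ (n * (nz k m).card) * emb k K m (disc k k m) ^ n ≠ 0 :=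
    mul_ne_zero (pow_ne_zero _ (inv_ne_zero hTv0)) (pow_ne_zero _ emb_disc_ne)
  apply mul_right_cancel₀ hne
  rw [rel2]; ring

end alg
end Drin


namespace Drin
open TensorProduct HomogeneousLocalization
section aff
variable (k K : Type*) [Field k] [Fintype k] [Field K] [Algebra k K] (m : ℕ)

/-- the coordinate ring of the Drinfeld space -/
abbrev AA : Type _ := Away (homogeneousSubmodule (Fin m) k) (disc k k m)

/-- structure map of a homogeneous localization -/
noncomputable def strHom (f : MvPolynomial (Fin m) k) :
    k →+* Away (homogeneousSubmodule (Fin m) k) f :=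
  (fromZeroRingHom (homogeneousSubmodule (Fin m) k) (Submonoid.powers f)).comp
      ((GradedRing.projZeroRingHom' (homogeneousSubmodule (Fin m) k)).comp
        (algebraMap k (MvPolynomial (Fin m) k)))

noncomputable instance algAA : Algebra k (AA k m) := (strHom k m (disc k k m)).toAlgebra

lemma discMem : disc k k m ∈ homogeneousSubmodule (Fin m) k (nz k m).card :=
  (mem_homogeneousSubmodule _ _).2 (disc_homog)

lemma strHom_val (f : MvPolynomial (Fin m) k) (c : k) :
    (strHom k m f c).val = algebraMap _ _ (C c : MvPolynomial (Fin m) k) := by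
  have : ((GradedRing.projZeroRingHom' (homogeneousSubmodule (Fin m) k)) (C c) :
      MvPolynomial (Fin m) k) = C c := by
    change ((DirectSum.decompose (homogeneousSubmodule (Fin m) k) (C c)) 0 : MvPolynomial (Fin m) k) = C c
    rw [DirectSum.decompose_of_mem_same]
    exact (mem_homogeneousSubmodule _ _).2 (isHomogeneous_C _ _)
  change Localization.mk _ _ = _
  rw [← Localization.mk_one_eq_algebraMap]
  congr 1

/-- lift of `emb` -/
noncomputable def embL : Localization.Away (disc k k m) →+* FractionRing (MvPolynomial (Fin m) K) :=
  IsLocalization.Away.lift (disc k k m) (g := emb k K m) (isUnit_iff_ne_zero.2 (emb_disc_ne))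

lemma embL_algebraMap (p : MvPolynomial (Fin m) k) :
    embL k K m (algebraMap _ _ p) = emb k K m p :=
  IsLocalization.Away.lift_eq _ _ _

lemma embL_injective : Function.Injective (embL k K m) := by
  rw [injective_iff_map_eq_zero]
  intro x hx
  obtain ⟨n, a, h⟩ := IsLocalization.Away.surj (disc k k m) x
  have := congrArg (embL k K m) h
  rw [map_mul, hx, zero_mul, embL_algebraMap] at this
  have ha : a = 0 := emb_injective (k := k) (K := K) (by rw [← this, map_zero])
  rw [ha, map_zero] at h
  have hu : IsUnit (algebraMap (MvPolynomial (Fin m) k) (Localization.Away (disc k k m)) (disc k k m) ^ n) :=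
    (IsLocalization.Away.algebraMap_isUnit _).pow n
  exact (hu.mul_left_eq_zero).1 h

/-- the embedding of the coordinate ring -/
noncomputable def jA : AA k m →ₐ[k] FractionRing (MvPolynomial (Fin m) K) :=
  { (embL k K m).comp (algebraMap (AA k m) (Localization.Away (disc k k m))) with
    commutes' := by
      intro c
      change embL k K m ((strHom k m (disc k k m) c).val) = _
      rw [strHom_val, embL_algebraMap, emb_C] }

lemma jA_apply (a : AA k m) : jA k K m a = embL k K m a.val := rfl

lemma jA_injective : Function.Injective (jA k K m) := fun a b h =>
  val_injective _ (embL_injective k K m h)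

lemma jA_mk (n : ℕ) (p : MvPolynomial (Fin m) k)
    (hp : p ∈ homogeneousSubmodule (Fin m) k (n • (nz k m).card)) :
    jA k K m (Away.mk _ (discMem k m) n p hp) * emb k K m (disc k k m) ^ n = emb k K m p := by
  rw [jA_apply, Away.val_mk, ← embL_algebraMap, ← embL_algebraMap, ← map_pow, ← map_mul, ← map_pow]
  congr 1
  rw [Localization.mk_eq_mk']
  exact IsLocalization.mk'_spec _ _ _

lemma jA_HA : HA (jA k K m) := by
  intro a
  obtain ⟨n, p, hp, rfl⟩ := Away.mk_surjective _ (discMem k m) a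
  exact ⟨n, p, (mem_homogeneousSubmodule _ _).1 hp, jA_mk k K m n p hp⟩

lemma jA_frac (u v : Fin m → k) (hv : v ≠ 0) : ∃ a, jA k K m a = ℓ k K u / ℓ k K v := by
  classical
  have hvm : v ∈ nz k m := mem_nz.2 hv
  have hd : disc k k m = (∏ w ∈ (nz k m).erase v, lin k k m w) * lin k k m v := by
    rw [disc, Finset.prod_erase_mul _ _ hvm]
  have hp : (lin k k m u * ∏ w ∈ (nz k m).erase v, lin k k m w) ∈
      homogeneousSubmodule (Fin m) k (1 • (nz k m).card) := by
    rw [mem_homogeneousSubmodule]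
    have h2 : (∏ w ∈ (nz k m).erase v, lin k k m w).IsHomogeneous (∑ w ∈ (nz k m).erase v, 1) :=
      IsHomogeneous.prod _ _ _ (fun w _ => lin_homog w)
    have := (lin_homog (K := k) u).mul h2
    convert this using 1
    rw [Finset.sum_const, Finset.card_erase_of_mem hvm, smul_eq_mul, smul_eq_mul]
    have := Finset.card_pos.2 ⟨v, hvm⟩
    omega
  refine ⟨Away.mk _ (discMem k m) 1 _ hp, ?_⟩
  have h := jA_mk k K m 1 _ hp
  have hd' := congrArg (emb k K m) hd
  rw [map_mul, emb_lin] at hd'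
  rw [pow_one, map_mul, emb_lin] at h
  have hne : emb k K m (disc k k m) ≠ 0 := emb_disc_ne
  have hv0 : ℓ k K v ≠ 0 := ℓ_ne_zero hv
  rw [eq_div_iff hv0]
  apply mul_right_cancel₀ hne
  rw [mul_right_comm, h, hd']
  ring

/-- graded hom -/
noncomputable def GT (T : (Fin m → k) ≃ₗ[k] (Fin m → k)) :
    (homogeneousSubmodule (Fin m) k) →+*ᵍ (homogeneousSubmodule (Fin m) k) :=
  { (sub T).toRingHom with
    map_mem := fun {i x} hx => (mem_homogeneousSubmodule _ _).2
      (sub_homog T ((mem_homogeneousSubmodule _ _).1 hx)) }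

variable {k m}
lemma GT_apply (T : (Fin m → k) ≃ₗ[k] (Fin m → k)) (p) : GT k m T p = sub T p := rfl

lemma GT_comp (T S : (Fin m → k) ≃ₗ[k] (Fin m → k)) (h : ∀ v, T (S v) = v) :
    (GT k m T).comp (GT k m S) = .id _ := by
  have := sub_comp T S h
  apply DFunLike.ext
  intro x
  exact DFunLike.congr_fun this x

lemma irr_of_comp {A σ : Type*} [CommRing A] [SetLike σ A] [AddSubgroupClass σ A]
    {𝒜 : ℕ → σ} [GradedRing 𝒜] (G H : 𝒜 →+*ᵍ 𝒜) (h : ∀ x, G (H x) = x) :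
    HomogeneousIdeal.irrelevant 𝒜 ≤ (HomogeneousIdeal.irrelevant 𝒜).map G := by
  rw [HomogeneousIdeal.irrelevant_le]
  intro i hi x hx
  have h2 : H x ∈ (HomogeneousIdeal.irrelevant 𝒜).toIdeal :=
    HomogeneousIdeal.mem_irrelevant_of_mem _ hi (H.2 hx)
  have h3 : G (H x) ∈ ((HomogeneousIdeal.irrelevant 𝒜).map G).toIdeal :=
    Ideal.mem_map_of_mem _ h2
  rw [h] at h3
  exact h3

lemma GT_irr (T : (Fin m → k) ≃ₗ[k] (Fin m → k)) :
    HomogeneousIdeal.irrelevant (homogeneousSubmodule (Fin m) k) ≤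
      (HomogeneousIdeal.irrelevant (homogeneousSubmodule (Fin m) k)).map (GT k m T) :=
  irr_of_comp _ (GT k m T.symm) (fun x =>
    DFunLike.congr_fun (GT_comp T T.symm (fun v => T.apply_symm_apply v)) x)

end aff
end Drin


namespace Drin
open TensorProduct HomogeneousLocalization
section sch

lemma awayι_map_aux {A σ : Type u} [CommRing A] [SetLike σ A] [AddSubgroupClass σ A]
    {𝒜 : ℕ → σ} [GradedRing 𝒜] (G : 𝒜 →+*ᵍ 𝒜)
    (hG : HomogeneousIdeal.irrelevant 𝒜 ≤ (HomogeneousIdeal.irrelevant 𝒜).map G)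
    {d : ℕ} (hd : 0 < d) (s s' : A) (hs : s ∈ 𝒜 d) (hs' : s' ∈ 𝒜 d) (h : G s = s') :
    ∃ γ : Away 𝒜 s →+* Away 𝒜 s',
      (∀ n p hp, γ (Away.mk 𝒜 hs n p hp) = Away.mk 𝒜 hs' n (G p) (G.2 hp)) ∧
      Proj.awayι 𝒜 s' hs' hd ≫ Proj.map G hG =
        Spec.map (CommRingCat.ofHom γ) ≫ Proj.awayι 𝒜 s hs hd := by
  subst h
  exact ⟨Away.map G s, fun n p hp => Away.map_mk G s hs n p hp, Proj.awayι_comp_map G hG hd s hs⟩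

variable {k : Type u} [Field k] {m : ℕ}

lemma awayι_projStruct (f : MvPolynomial (Fin m) k) {d : ℕ} (hd : 0 < d)
    (hf : f ∈ homogeneousSubmodule (Fin m) k d) :
    Proj.awayι _ f hf hd ≫ projStruct k m = Spec.map (CommRingCat.ofHom (strHom k m f)) := by
  rw [projStruct, Proj.awayι_toSpecZero_assoc, ← Spec.map_comp]
  rfl

variable [Fintype k]

lemma strHom_eq_mk (f : MvPolynomial (Fin m) k) {d : ℕ}
    (hf : f ∈ homogeneousSubmodule (Fin m) k d) (c : k) :
    strHom k m f c = Away.mk _ hf 0 (C c)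
      ((mem_homogeneousSubmodule _ _).2 (by rw [zero_smul]; exact isHomogeneous_C _ _)) := by
  apply val_injective
  rw [strHom_val, Away.val_mk, ← Localization.mk_one_eq_algebraMap]
  congr 1

lemma projMap_struct (T : (Fin m → k) ≃ₗ[k] (Fin m → k)) :
    Proj.map (GT k m T) (GT_irr T) ≫ projStruct k m = projStruct k m := by
  refine (Proj.mapAffineOpenCover (GT k m T) (GT_irr T)).openCover.hom_ext _ _ fun s ↦ ?_
  have h1 := Proj.awayι_comp_map (GT k m T) (GT_irr T) s.1.2 s.2.1 s.2.2
  have h2 := awayι_projStruct (s.2 : MvPolynomial (Fin m) k) s.1.2 s.2.2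
  have h3 := awayι_projStruct (GT k m T s.2 : MvPolynomial (Fin m) k) s.1.2 ((GT k m T).2 s.2.2)
  change Proj.awayι _ (GT k m T s.2) _ s.1.2 ≫ _ = Proj.awayι _ (GT k m T s.2) _ s.1.2 ≫ _
  rw [reassoc_of% h1, h2]
  refine Eq.trans ?_ h3.symm
  rw [← Spec.map_comp, ← CommRingCat.ofHom_comp]
  congr 2
  ext c
  rw [strHom_val, RingHom.comp_apply, strHom_eq_mk _ s.2.2, Away.map_mk, Away.val_mk]
  have : GT k m T (C c) = C c := (sub T).commutes c
  simp_rw [this, pow_zero]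
  exact Localization.mk_one_eq_algebraMap _

/-- automorphism of projective space -/
noncomputable def psi (T : (Fin m → k) ≃ₗ[k] (Fin m → k)) : projSpace k m ≅ projSpace k m where
  hom := Proj.map (GT k m T) (GT_irr T)
  inv := Proj.map (GT k m T.symm) (GT_irr T.symm)
  hom_inv_id := by
    rw [← Proj.map_comp, ← Proj.map_id]
    congr 1
    exact GT_comp T T.symm (fun v => T.apply_symm_apply v)
  inv_hom_id := by
    rw [← Proj.map_comp, ← Proj.map_id]
    congr 1
    exact GT_comp T.symm T (fun v => T.symm_apply_apply v)

lemma nz_pos (hm : 0 < m) : 0 < (nz k m).card := by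
  refine Finset.card_pos.2 ⟨Pi.single ⟨0, hm⟩ 1, mem_nz.2 ?_⟩
  simp

lemma opens_eq : drinfeldOpens k m = Proj.basicOpen (homogeneousSubmodule (Fin m) k) (disc k k m) := by
  ext x
  change (∀ c : Fin m → k, c ≠ 0 → _) ↔ _
  rw [SetLike.mem_coe, Proj.mem_basicOpen]
  rw [disc]
  have := x.isPrime
  change _ ↔ _ ∉ x.asHomogeneousIdeal.toIdeal
  rw [Ideal.IsPrime.prod_mem_iff]
  push Not
  refine forall_congr' fun c => ?_
  rw [mem_nz, lin_apply]
  simp_rw [MvPolynomial.smul_eq_C_mul]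
  rfl

/-- Drinfeld space is affine -/
lemma exists_iso (hm : 0 < m) : ∃ e : drinfeldScheme k m ≅ Spec (.of (AA k m)),
    e.inv ≫ drinfeldι k m = Proj.awayι _ (disc k k m) (discMem k m) (nz_pos hm) := by
  have := opens_eq (k := k) (m := m)
  refine ⟨Scheme.isoOfEq _ this ≪≫ Proj.basicOpenIsoSpec _ _ (discMem k m) (nz_pos hm), ?_⟩
  rw [drinfeldι]
  simp [Proj.awayι]

variable {K : Type u} [Field K] [Algebra k K]

lemma exists_E (hm : 0 < m) :
    ∃ (E : pullback (drinfeldStruct k m) (Spec.map (CommRingCat.ofHom (algebraMap k K))) ≅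
        Spec (.of (K ⊗[k] AA k m))),
      E.inv ≫ pullback.fst _ _ ≫ drinfeldι k m =
        Spec.map (CommRingCat.ofHom (Algebra.TensorProduct.includeRight :
          AA k m →ₐ[k] K ⊗[k] AA k m).toRingHom) ≫
          Proj.awayι _ (disc k k m) (discMem k m) (nz_pos hm) ∧
      E.inv ≫ pullback.snd _ _ =
        Spec.map (CommRingCat.ofHom (algebraMap K (K ⊗[k] AA k m))) := by
  obtain ⟨e, he⟩ := exists_iso (k := k) hm
  have hs : e.inv ≫ drinfeldStruct k m = Spec.map (CommRingCat.ofHom (algebraMap k (AA k m))) := by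
    rw [drinfeldStruct, reassoc_of% he, awayι_projStruct]
  have H := isPullback_SpecMap_of_isPushout _ _ _ _
    (CommRingCat.isPushout_tensorProduct k K (AA k m)).flip
  have H2 : IsPullback (Spec.map (CommRingCat.ofHom (Algebra.TensorProduct.includeRight :
          AA k m →ₐ[k] K ⊗[k] AA k m).toRingHom) ≫ e.inv)
      (Spec.map (CommRingCat.ofHom (algebraMap K (K ⊗[k] AA k m))))
      (drinfeldStruct k m) (Spec.map (CommRingCat.ofHom (algebraMap k K))) := by
    refine H.of_iso (Iso.refl _) e.symm (Iso.refl _) (Iso.refl _) ?_ ?_ ?_ ?_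
    · simp
    · simp
    · simp [hs]
    · simp
  refine ⟨H2.isoPullback.symm, ?_, ?_⟩
  · rw [Iso.symm_inv, IsPullback.isoPullback_hom_fst_assoc, Category.assoc, he]
  · rw [Iso.symm_inv, IsPullback.isoPullback_hom_snd]

theorem main_pos (hm : 0 < m)
    (φ : pullback (drinfeldStruct k m) (Spec.map (CommRingCat.ofHom (algebraMap k K))) ≅
        pullback (drinfeldStruct k m) (Spec.map (CommRingCat.ofHom (algebraMap k K))))
    (hφ : φ.hom ≫ pullback.snd _ _ = pullback.snd _ _) :
    ∃ T : (Fin m → k) ≃ₗ[k] (Fin m → k),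
      pullback.fst _ _ ≫ drinfeldι k m ≫ (psi T).hom =
        φ.hom ≫ pullback.fst _ _ ≫ drinfeldι k m := by
  obtain ⟨E, hE1, hE2⟩ := exists_E (k := k) (K := K) hm
  have hφi : φ.inv ≫ pullback.snd _ _ = pullback.snd _ _ := by
    rw [Iso.inv_comp_eq, hφ]
  obtain ⟨F, hF⟩ := Spec.map_surjective (E.inv ≫ φ.hom ≫ E.hom)
  obtain ⟨F', hF'⟩ := Spec.map_surjective (E.inv ≫ φ.inv ≫ E.hom)
  have h1 : F ≫ F' = 𝟙 _ := by
    apply Spec.map_injective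
    rw [Spec.map_comp, hF, hF']
    simp
  have h2 : F' ≫ F = 𝟙 _ := by
    apply Spec.map_injective
    rw [Spec.map_comp, hF, hF']
    simp
  have h3 : CommRingCat.ofHom (algebraMap K (K ⊗[k] AA k m)) ≫ F =
      CommRingCat.ofHom (algebraMap K (K ⊗[k] AA k m)) := by
    apply Spec.map_injective
    rw [Spec.map_comp, hF, ← hE2]
    simp [hφ]
  let Φ : K ⊗[k] AA k m ≃ₐ[K] K ⊗[k] AA k m :=
    AlgEquiv.ofRingEquiv (f := RingEquiv.ofRingHom F.hom F'.hom
      (by rw [← CommRingCat.hom_comp, h2]; rfl) (by rw [← CommRingCat.hom_comp, h1]; rfl))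
      (fun c => by
        have := congrArg (fun g => g.hom c) h3
        exact this)
  have hΦ : ∀ x, Φ x = F.hom x := fun x => rfl
  have hv0 : (Pi.single ⟨0, hm⟩ 1 : Fin m → k) ≠ 0 := by simp
  obtain ⟨T, hT⟩ := core_A (jA_HA k K m) (jA_injective k K m) (jA_frac k K m) _ hv0 Φ
  refine ⟨T, ?_⟩
  obtain ⟨γ, hγ, hγ2⟩ := awayι_map_aux (GT k m T) (GT_irr T) (nz_pos (k := k) hm) (disc k k m) (disc k k m)
    (discMem k m) (discMem k m) (sub_disc T)
  rw [← cancel_epi E.inv, reassoc_of% hE1]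
  have h4 : E.inv ≫ φ.hom = Spec.map F ≫ E.inv := by rw [hF]; simp
  rw [reassoc_of% h4, hE1]
  change _ ≫ _ ≫ Proj.map _ _ = _
  rw [hγ2, ← Spec.map_comp_assoc, ← Spec.map_comp_assoc]
  congr 2
  ext a
  obtain ⟨n, p, hp, rfl⟩ := Away.mk_surjective _ (discMem k m) a
  have := hT (Away.mk _ (discMem k m) n p hp)
    (Away.mk _ (discMem k m) n (sub T p) ((GT k m T).2 hp)) n p
    ((mem_homogeneousSubmodule _ _).1 hp) (jA_mk k K m n p hp) (jA_mk k K m n _ _)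
  rw [hΦ] at this
  refine Eq.trans ?_ this.symm
  exact congrArg (fun z => (1 : K) ⊗ₜ[k] z) (hγ n p hp)

lemma empty_zero : IsEmpty (projSpace k 0) := by
  refine ⟨fun x => x.not_irrelevant_le ?_⟩
  rw [HomogeneousIdeal.irrelevant_le]
  intro i hi p hp
  have h := (mem_homogeneousSubmodule _ _).1 hp
  obtain ⟨c, rfl⟩ := MvPolynomial.C_surjective (Fin 0) p
  have : (C c : MvPolynomial (Fin 0) k) = 0 := by
    by_contra hc
    exact hi.ne' (h.inj_right (isHomogeneous_C _ _) hc)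
  rw [this]
  exact Ideal.zero_mem _

theorem main_all
    (φ : pullback (drinfeldStruct k m) (Spec.map (CommRingCat.ofHom (algebraMap k K))) ≅
        pullback (drinfeldStruct k m) (Spec.map (CommRingCat.ofHom (algebraMap k K))))
    (hφ : φ.hom ≫ pullback.snd _ _ = pullback.snd _ _) :
    ∃ T : (Fin m → k) ≃ₗ[k] (Fin m → k),
      pullback.fst _ _ ≫ drinfeldι k m ≫ (psi T).hom =
        φ.hom ≫ pullback.fst _ _ ≫ drinfeldι k m := by
  rcases Nat.eq_zero_or_pos m with rfl | hm
  · have h1 : IsEmpty (projSpace k 0) := empty_zero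
    have h2 : IsEmpty ↥(pullback (drinfeldStruct k 0) (Spec.map (CommRingCat.ofHom (algebraMap k K)))) :=
      Function.isEmpty (pullback.fst (drinfeldStruct k 0) (Spec.map (CommRingCat.ofHom (algebraMap k K))) ≫ drinfeldι k 0)
    exact ⟨LinearEquiv.refl _ _, isInitialOfIsEmpty.hom_ext _ _⟩
  · exact main_pos hm φ hφ

end sch
end Drin

theorem stmt_1 (k : Type u) [Field k] [Fintype k]
    (V : Type*) [AddCommGroup V] [Module k V] [FiniteDimensional k V]
    (K : Type u) [Field K] [Algebra k K]
    (φ : pullback (drinfeldStruct k (finrank k V))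
          (Spec.map (CommRingCat.ofHom (algebraMap k K))) ≅
        pullback (drinfeldStruct k (finrank k V))
          (Spec.map (CommRingCat.ofHom (algebraMap k K))))
    (hφ : φ.hom ≫ pullback.snd (drinfeldStruct k (finrank k V))
            (Spec.map (CommRingCat.ofHom (algebraMap k K))) =
          pullback.snd (drinfeldStruct k (finrank k V))
            (Spec.map (CommRingCat.ofHom (algebraMap k K)))) :
    ∃ (ψ : projSpace k (finrank k V) ≅ projSpace k (finrank k V))
      (hψ : ψ.hom ≫ projStruct k (finrank k V) = projStruct k (finrank k V)),
      pullback.map (drinfeldStruct k (finrank k V))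
          (Spec.map (CommRingCat.ofHom (algebraMap k K)))
          (projStruct k (finrank k V))
          (Spec.map (CommRingCat.ofHom (algebraMap k K)))
          (drinfeldι k (finrank k V)) (𝟙 _) (𝟙 _)
          (by simp [drinfeldStruct]) (by simp) ≫
        pullback.map (projStruct k (finrank k V))
          (Spec.map (CommRingCat.ofHom (algebraMap k K)))
          (projStruct k (finrank k V))
          (Spec.map (CommRingCat.ofHom (algebraMap k K)))
          ψ.hom (𝟙 _) (𝟙 _) (by rw [Category.comp_id, hψ]) (by simp) =
      φ.hom ≫
        pullback.map (drinfeldStruct k (finrank k V))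
          (Spec.map (CommRingCat.ofHom (algebraMap k K)))
          (projStruct k (finrank k V))
          (Spec.map (CommRingCat.ofHom (algebraMap k K)))
          (drinfeldι k (finrank k V)) (𝟙 _) (𝟙 _)
          (by simp [drinfeldStruct]) (by simp) := by
  obtain ⟨T, hT⟩ := Drin.main_all φ hφ
  refine ⟨Drin.psi T, Drin.projMap_struct T, ?_⟩
  apply pullback.hom_ext
  · simp only [pullback.map, Category.assoc, pullback.lift_fst, pullback.lift_fst_assoc]
    exact hT
  · simp only [pullback.map, Category.assoc, pullback.lift_snd, Category.comp_id]
    exact hφ.symm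
end

section
/- Let k be a finite field and V a finite-dimensional k-vector space with dim V ≥ 1. The Drinfeld half-space Ω(V), i.e. the open subscheme of P(V) complementary to the union of all k-rational hyperplanes, is an affine scheme. -/
open AlgebraicGeometry CategoryTheory MvPolynomial Module

attribute [local instance] MvPolynomial.gradedAlgebra

/-- The linear form with coefficients `c`. -/
noncomputable def linForm (k : Type*) [Field k] (m : ℕ) (c : Fin m → k) :
    MvPolynomial (Fin m) k :=
  ∑ i, MvPolynomial.C (c i) * MvPolynomial.X i

lemma linForm_mem (k : Type*) [Field k] (m : ℕ) (c : Fin m → k) :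
    linForm k m c ∈ homogeneousSubmodule (Fin m) k 1 := by
  rw [mem_homogeneousSubmodule]
  refine IsHomogeneous.sum _ _ _ fun i _ => ?_
  simpa using (isHomogeneous_C (Fin m) (c i)).mul (isHomogeneous_X k i)

lemma isAffine_drinfeld (k : Type*) [Field k] [Fintype k] (m : ℕ) (hm : 1 ≤ m) :
    IsAffine (drinfeldScheme k m) := by
  classical
  let s : Finset (Fin m → k) := Finset.univ.filter (· ≠ 0)
  have hs : 0 < s.card := by
    refine Finset.card_pos.mpr ⟨fun _ => 1, ?_⟩
    simp only [s, Finset.mem_filter, Finset.mem_univ, true_and]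
    intro h
    exact one_ne_zero (congrFun h ⟨0, hm⟩)
  have hdeg : (∏ c ∈ s, linForm k m c) ∈ homogeneousSubmodule (Fin m) k s.card := by
    rw [mem_homogeneousSubmodule]
    have := IsHomogeneous.prod s (fun c => linForm k m c) (fun _ => 1)
      (fun c _ => (mem_homogeneousSubmodule _ _).1 (linForm_mem k m c))
    simpa using this
  have heq : drinfeldOpens k m =
      Proj.basicOpen (homogeneousSubmodule (Fin m) k) (∏ c ∈ s, linForm k m c) := by
    ext x
    have hp := x.isPrime
    change (∀ c : Fin m → k, c ≠ 0 → linForm k m c ∉ x.asHomogeneousIdeal.toIdeal) ↔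
      (∏ c ∈ s, linForm k m c) ∉ x.asHomogeneousIdeal.toIdeal
    rw [hp.prod_mem_iff]
    simp [s]
  have h := Proj.isAffineOpen_basicOpen (homogeneousSubmodule (Fin m) k) _ hdeg hs
  rw [← heq] at h
  exact h

/-- The Drinfeld half-space `Ω(V)`, the complement in `P(V)` of all
`k`-rational hyperplanes, is an affine scheme (here `dim V ≥ 1`). -/
theorem stmt_2 (k : Type*) [Field k] [Fintype k]
    (V : Type*) [AddCommGroup V] [Module k V] [FiniteDimensional k V]
    (hV : 1 ≤ finrank k V) :
    IsAffine (drinfeldScheme k (finrank k V)) := by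
  exact isAffine_drinfeld k _ hV
end

section
/- Let k be a finite field, let t ≥ 2, let V be a k-vector space of dimension t+1, and let H ≤ V be a subspace of dimension t. Then the number of subspaces U ≤ V with 1 ≤ dim U ≤ t−1 which are not contained in H is at least the number of subspaces U ≤ H with 1 ≤ dim U ≤ t−2. In the paper's notation: ν(t) ≥ λ(t−1). -/
open Module

/-- ν(t) ≥ λ(t−1): the number of subspaces `U ≤ V` (with `dim V = t+1`)
satisfying `1 ≤ dim U ≤ t−1` and not contained in the hyperplane `H` is at
least the number of subspaces `U ≤ H` with `1 ≤ dim U ≤ t−2`. -/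
theorem stmt_4 (k : Type*) [Field k] [Fintype k] (t : ℕ) (ht : 2 ≤ t)
    (V : Type*) [AddCommGroup V] [Module k V] [FiniteDimensional k V]
    (hV : finrank k V = t + 1)
    (H : Submodule k V) (hH : finrank k H = t) :
    Nat.card {U : Submodule k V //
        U ≤ H ∧ 1 ≤ finrank k U ∧ finrank k U ≤ t - 2} ≤
      Nat.card {U : Submodule k V //
        (1 ≤ finrank k U ∧ finrank k U ≤ t - 1) ∧ ¬ U ≤ H} := by
  have hne : H ≠ ⊤ := by
    rintro rfl
    rw [finrank_top] at hH
    omega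
  obtain ⟨p, -, hp⟩ := SetLike.exists_of_lt (lt_top_iff_ne_top.mpr hne)
  have hdis : Submodule.span k {p} ⊓ H = ⊥ := by
    rw [eq_bot_iff]
    rintro x ⟨hx, hxH⟩
    obtain ⟨c, rfl⟩ := Submodule.mem_span_singleton.mp hx
    by_cases hc : c = 0
    · simp [hc]
    · exact absurd ((Submodule.smul_mem_iff H hc).mp hxH) hp
  have key : ∀ L : Submodule k V, L ≤ H → (L ⊔ Submodule.span k {p}) ⊓ H = L := by
    intro L hL
    rw [sup_inf_assoc_of_le _ hL, hdis, sup_bot_eq]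
  haveI : Finite V := Module.finite_of_finite k
  haveI : Finite (Submodule k V) := Finite.of_injective _ SetLike.coe_injective
  refine Nat.card_le_card_of_injective
    (fun L => ⟨L.1 ⊔ Submodule.span k {p}, ⟨?_, ?_⟩, ?_⟩) ?_
  · exact L.2.2.1.trans (Submodule.finrank_mono le_sup_left)
  · have h1 := Submodule.finrank_add_le_finrank_add_finrank L.1 (Submodule.span k {p})
    have h2 : finrank k (Submodule.span k {p}) ≤ 1 := by
      simpa using finrank_span_le_card (R := k) ({p} : Set V)
    have h3 := L.2.2.2
    omega
  · intro h
    exact hp (h (le_sup_right (a := L.1) (Submodule.mem_span_singleton_self p)))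
  · intro L M h
    have h' := congrArg (fun W => W.1 ⊓ H) h
    simp only [key L.1 L.2.1, key M.1 M.2.1] at h'
    exact Subtype.ext h'
end

section
/- Let k be a finite field, let t ≥ 2, let V be a k-vector space of dimension t+1, and let H ≤ V be any subspace of dimension t. Then the number of subspaces U ≤ V with 1 ≤ dim U ≤ t−1 is strictly greater than 1 plus twice the number of subspaces U ≤ H with 1 ≤ dim U ≤ t−2. In the paper's notation: λ(t) − λ(t−1) > λ(t−1) + 1 for all t ≥ 2. -/
open Module

/-- λ(t) > 2·λ(t−1) + 1 for t ≥ 2: the number of subspaces `U ≤ V`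
(with `dim V = t+1`) satisfying `1 ≤ dim U ≤ t−1` is strictly greater than
`1` plus twice the number of subspaces `U ≤ H` with `1 ≤ dim U ≤ t−2`, where
`H` is any hyperplane of `V`. -/
theorem stmt_5 (k : Type*) [Field k] [Fintype k] (t : ℕ) (ht : 2 ≤ t)
    (V : Type*) [AddCommGroup V] [Module k V] [FiniteDimensional k V]
    (hV : finrank k V = t + 1)
    (H : Submodule k V) (hH : finrank k H = t) :
    1 + 2 * Nat.card {U : Submodule k V //
        U ≤ H ∧ 1 ≤ finrank k U ∧ finrank k U ≤ t - 2} <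
      Nat.card {U : Submodule k V // 1 ≤ finrank k U ∧ finrank k U ≤ t - 1} := by
  have hfin : Finite V := Module.finite_of_finite k
  have hfinS : Finite (Submodule k V) := Finite.of_injective _ SetLike.coe_injective
  obtain ⟨v, hv⟩ : ∃ v, v ∉ H := by
    by_contra! h
    have : H = ⊤ := by ext x; simp [h x]
    subst this
    rw [finrank_top] at hH
    omega
  have hv0 : v ≠ 0 := by rintro rfl; exact hv H.zero_mem
  obtain ⟨W, hWH, hW⟩ : ∃ W : Submodule k V, W ≤ H ∧ finrank k W = t - 1 := by
    obtain ⟨f, hf⟩ := exists_linearIndependent_of_le_finrank (R := k) (M := H)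
      (n := t - 1) (by omega)
    refine ⟨(Submodule.span k (Set.range f)).map H.subtype, Submodule.map_subtype_le _ _, ?_⟩
    rw [Submodule.finrank_map_subtype_eq, finrank_span_eq_card hf, Fintype.card_fin]
  have hd : (k ∙ v) ⊓ H = ⊥ := by
    have := (Submodule.disjoint_span_singleton' (s := H) hv0).2 hv
    exact this.symm.eq_bot
  have hinf : ∀ U : Submodule k V, U ≤ H → (U ⊔ (k ∙ v)) ⊓ H = U := by
    intro U hU
    rw [sup_inf_assoc_of_le _ hU, hd, sup_bot_eq]
  have hnot : ∀ U : Submodule k V, ¬ (U ⊔ (k ∙ v)) ≤ H := by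
    intro U h
    exact hv (h (Submodule.mem_sup_right (Submodule.mem_span_singleton_self v)))
  have hsp : finrank k (k ∙ v) = 1 := finrank_span_singleton hv0
  have hr1 : ∀ U : Submodule k V, 1 ≤ finrank k ↥(U ⊔ (k ∙ v)) := by
    intro U
    rw [← hsp]
    exact Submodule.finrank_mono le_sup_right
  have hr2 : ∀ U : Submodule k V, finrank k ↥(U ⊔ (k ∙ v)) ≤ finrank k U + 1 := by
    intro U
    rw [← hsp]
    exact Submodule.finrank_add_le_finrank_add_finrank _ _
  set A := {U : Submodule k V // U ≤ H ∧ 1 ≤ finrank k U ∧ finrank k U ≤ t - 2} with hA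
  set B := {U : Submodule k V // 1 ≤ finrank k U ∧ finrank k U ≤ t - 1} with hB
  let g : Option A → B := fun o => match o with
    | none => ⟨W, by omega, by omega⟩
    | some U => ⟨U.1, U.2.2.1, by have := U.2.2.2; omega⟩
  let h : Option A → B := fun o => match o with
    | none => ⟨⊥ ⊔ (k ∙ v), hr1 _, by
        have := hr2 ⊥
        rw [finrank_bot] at this
        omega⟩
    | some U => ⟨U.1 ⊔ (k ∙ v), hr1 _, by
        have := hr2 U.1
        have h1 := U.2.2.1
        have h2 := U.2.2.2
        omega⟩
  have hg : Function.Injective g := by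
    rintro (_ | ⟨U, hU⟩) (_ | ⟨U', hU'⟩) e
    · rfl
    · have e' : W = U' := congrArg Subtype.val e
      subst e'
      omega
    · have e' : U = W := congrArg Subtype.val e
      subst e'
      omega
    · have e' : U = U' := congrArg Subtype.val e
      subst e'
      rfl
  have key : ∀ U U' : Submodule k V, U ≤ H → U' ≤ H → U ⊔ (k ∙ v) = U' ⊔ (k ∙ v) → U = U' := by
    intro U U' h1 h2 e
    rw [← hinf U h1, e, hinf U' h2]
  have hh : Function.Injective h := by
    rintro (_ | ⟨U, hU⟩) (_ | ⟨U', hU'⟩) e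
    · rfl
    · have e' : ⊥ = U' := key _ _ bot_le hU'.1 (congrArg Subtype.val e)
      subst e'
      have := hU'.2.1
      rw [finrank_bot] at this
      omega
    · have e' : U = ⊥ := key _ _ hU.1 bot_le (congrArg Subtype.val e)
      subst e'
      have := hU.2.1
      rw [finrank_bot] at this
      omega
    · have e' : U = U' := key _ _ hU.1 hU'.1 (congrArg Subtype.val e)
      subst e'
      rfl
  have hgH : ∀ o, (g o).1 ≤ H := by
    rintro (_ | U)
    · exact hWH
    · exact U.2.1
  have hhH : ∀ o, ¬ (h o).1 ≤ H := by
    rintro (_ | U)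
    · exact hnot _
    · exact hnot _
  have hinj : Function.Injective (Sum.elim g h) :=
    hg.sumElim hh (fun a b e => hhH b (e ▸ hgH a))
  have hcard := Nat.card_le_card_of_injective _ hinj
  rw [Nat.card_sum, Finite.card_option] at hcard
  omega
end

section
/- Let k be a finite field and let λ(d) denote the number of k-subspaces U of a (d+1)-dimensional k-vector space with 1 ≤ dim U ≤ d−1 (with λ(0) = 0). Let n ≥ 1 and let d, d' be integers with 0 ≤ d, d' ≤ n−1 and d < d' < n−1−d. Then λ(n−1−d) + λ(d) > λ(n−1−d') + λ(d') + 1. -/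
open Module

/-- `lam k d` is the number of nontrivial linear subspaces of codimension at
least 2 in the projective space `P^d` over `k`, i.e. the number of subspaces
`U` of a `(d+1)`-dimensional `k`-vector space with `1 ≤ dim U ≤ d − 1`
(for `d = 0` the condition is empty, so `lam k 0 = 0`). -/
noncomputable def lam (k : Type*) [Field k] (d : ℕ) : ℕ :=
  Nat.card {U : Submodule k (Fin (d + 1) → k) //
    1 ≤ finrank k U ∧ finrank k U ≤ d - 1}

theorem finrank_submodule_prod_aux {k V W : Type*} [Field k] [AddCommGroup V] [Module k V]
    [AddCommGroup W] [Module k W] [FiniteDimensional k V] [FiniteDimensional k W]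
    (p : Submodule k V) (q : Submodule k W) :
    finrank k (p.prod q) = finrank k p + finrank k q := by
  rw [← finrank_prod]
  let f : (p.prod q) ≃ₗ[k] (p × q) :=
    { toFun := fun x => (⟨x.1.1, x.2.1⟩, ⟨x.1.2, x.2.2⟩)
      invFun := fun y => ⟨(y.1.1, y.2.1), ⟨y.1.2, y.2.2⟩⟩
      map_add' := fun _ _ => rfl
      map_smul' := fun _ _ => rfl
      left_inv := fun _ => rfl
      right_inv := fun _ => rfl }
  exact f.finrank_eq

theorem exists_hyperplane_aux (k : Type*) [Field k] (m : ℕ) :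
    ∃ H : Submodule k (Fin (m + 1) → k), finrank k H = m := by
  refine ⟨LinearMap.ker (LinearMap.proj (R := k) (φ := fun _ : Fin (m + 1) => k) 0), ?_⟩
  have h := LinearMap.finrank_range_add_finrank_ker
    (LinearMap.proj (R := k) (φ := fun _ : Fin (m + 1) => k) 0)
  rw [LinearMap.range_eq_top.2 (LinearMap.proj_surjective 0)] at h
  simp at h
  omega

theorem lam_step_aux (k : Type*) [Field k] [Fintype k] (m : ℕ) :
    2 * lam k (m + 1) + 2 ≤ lam k (m + 2) := by
  classical
  obtain ⟨H, hH⟩ := exists_hyperplane_aux k (m + 1)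
  let W := Fin (m + 1 + 1) → k
  let S := {U : Submodule k W // 1 ≤ finrank k U ∧ finrank k U ≤ m + 1 - 1}
  let T := {U : Submodule k (Fin (m + 2 + 1) → k) // 1 ≤ finrank k U ∧ finrank k U ≤ m + 2 - 1}
  have hfr : finrank k (k × W) = finrank k (Fin (m + 2 + 1) → k) := by
    simp [W]; omega
  let φ : (k × W) ≃ₗ[k] (Fin (m + 2 + 1) → k) := LinearEquiv.ofFinrankEq _ _ hfr
  let a : Option S → Submodule k W := fun o => o.elim H (fun U => U.1)
  let b : Option S → Submodule k W := fun o => o.elim ⊥ (fun U => U.1)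
  have ha : Function.Injective a := by
    rintro (_ | U) (_ | U') h
    · rfl
    · exfalso
      have h' : H = U'.1 := h
      have := U'.2.2
      rw [← h', hH] at this
      omega
    · exfalso
      have h' : U.1 = H := h
      have := U.2.2
      rw [h', hH] at this
      omega
    · exact congrArg some (Subtype.ext h)
  have hb : Function.Injective b := by
    rintro (_ | U) (_ | U') h
    · rfl
    · exfalso
      have h' : ⊥ = U'.1 := h
      have := U'.2.1
      rw [← h', finrank_bot] at this
      omega
    · exfalso
      have h' : U.1 = ⊥ := h
      have := U.2.1
      rw [h', finrank_bot] at this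
      omega
    · exact congrArg some (Subtype.ext h)
  have ha1 : ∀ o, 1 ≤ finrank k (a o) ∧ finrank k (a o) ≤ m + 1 := by
    rintro (_ | U)
    · change 1 ≤ finrank k H ∧ finrank k H ≤ m + 1
      omega
    · exact ⟨U.2.1, U.2.2.trans (by omega)⟩
  have hb1 : ∀ o, finrank k (b o) ≤ m := by
    rintro (_ | U)
    · change finrank k (⊥ : Submodule k W) ≤ m
      rw [finrank_bot]; omega
    · exact U.2.2
  let G : Option S ⊕ Option S → Submodule k (k × W) :=
    Sum.elim (fun o => (⊥ : Submodule k k).prod (a o)) (fun o => (⊤ : Submodule k k).prod (b o))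
  have hprod : ∀ (p p' : Submodule k k) (q q' : Submodule k W), p.prod q = p'.prod q' →
      p = p' ∧ q = q' := by
    intro p p' q q' h
    constructor
    · ext x
      have := congrArg (fun s => (x, (0 : W)) ∈ s) h
      simpa using this
    · ext x
      have := congrArg (fun s => ((0 : k), x) ∈ s) h
      simpa using this
  have hG : Function.Injective G := by
    rintro (o | o) (o' | o') h <;> have h' := hprod _ _ _ _ h
    · rw [ha h'.2]
    · exact absurd h'.1 bot_ne_top
    · exact absurd h'.1 top_ne_bot
    · rw [hb h'.2]
  have hG1 : ∀ x, 1 ≤ finrank k (G x) ∧ finrank k (G x) ≤ m + 1 := by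
    rintro (o | o)
    · have := ha1 o
      change 1 ≤ finrank k ((⊥ : Submodule k k).prod (a o)) ∧
        finrank k ((⊥ : Submodule k k).prod (a o)) ≤ m + 1
      rw [finrank_submodule_prod_aux, finrank_bot]
      omega
    · have := hb1 o
      change 1 ≤ finrank k ((⊤ : Submodule k k).prod (b o)) ∧
        finrank k ((⊤ : Submodule k k).prod (b o)) ≤ m + 1
      rw [finrank_submodule_prod_aux, finrank_top, finrank_self]
      omega
  let F : Option S ⊕ Option S → T := fun x => ⟨(G x).map φ.toLinearMap, by
    have := hG1 x
    have h2 : finrank k ((G x).map φ.toLinearMap) = finrank k (G x) := φ.finrank_map_eq (G x)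
    rw [h2]; omega⟩
  have hF : Function.Injective F := by
    intro x y h
    exact hG (Submodule.map_injective_of_injective φ.injective (congrArg Subtype.val h))
  have hc := Nat.card_le_card_of_injective F hF
  rw [Nat.card_sum, Finite.card_option] at hc
  change 2 * Nat.card S + 2 ≤ Nat.card T
  omega

theorem lam_zero_aux (k : Type*) [Field k] : lam k 0 = 0 := by
  unfold lam
  have : IsEmpty {U : Submodule k (Fin (0 + 1) → k) //
    1 ≤ finrank k U ∧ finrank k U ≤ 0 - 1} := ⟨fun U => by have := U.2; omega⟩
  exact Nat.card_of_isEmpty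

theorem lam_mono_aux (k : Type*) [Field k] [Fintype k] : Monotone (lam k) := by
  refine monotone_nat_of_le_succ ?_
  rintro (_ | m)
  · rw [lam_zero_aux]; exact Nat.zero_le _
  · have := lam_step_aux k m
    show lam k (m + 1) ≤ lam k (m + 2)
    omega

/-- If `d < d' < n−1−d` (with `0 ≤ d, d' ≤ n−1`), then
`λ(n−1−d) + λ(d) > λ(n−1−d') + λ(d') + 1`. -/
theorem stmt_6 (k : Type*) [Field k] [Fintype k] (n d d' : ℕ) (hn : 1 ≤ n)
    (hd : d ≤ n - 1) (hd' : d' ≤ n - 1) (h1 : d < d') (h2 : d' < n - 1 - d) :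
    lam k (n - 1 - d') + lam k d' + 1 < lam k (n - 1 - d) + lam k d := by
  obtain ⟨m, hm⟩ : ∃ m, n - 1 - d = m + 2 := ⟨n - 1 - d - 2, by omega⟩
  have e1 : lam k (n - 1 - d') ≤ lam k (m + 1) := lam_mono_aux k (by omega)
  have e2 : lam k d' ≤ lam k (m + 1) := lam_mono_aux k (by omega)
  have e3 := lam_step_aux k m
  rw [hm]
  omega
end
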